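/- arXiv:1501.01498 — 4 statements merged into one kernel-verified Lean document; each statement's English description precedes it below -/
import Mathlib

section
/- Assume (LC): there exists L ≥ 0 such that |λ^γ(w) − λ^γ(w′)| ≤ L Σ_{γ′=1}^d |w^{γ′} − w′^{γ′}| for every γ and all w, w′ ∈ [0,1]^d. Let u = (u¹,…,u^d) be a probabilistic solution (for some initial data) such that t ↦ u(t,·) is continuous in L¹_loc(ℝ)^d. Then there exist constants C > 0 and β > 0 such that for every (τ,ξ) ∈ [0,+∞)×ℝ and all a, b ∈ ℝ with a < ξ < b, limsup_{h↓0} (1/h) ∫_{a+βh}^{b−βh} Σ_{γ=1}^d |u^γ(τ+h, x) − u^γ(τ, x − λ^γ{u}(τ,ξ)·h)| dx ≤ C · ( Σ_{γ=1}^d ( u^γ(τ, b⁻) − u^γ(τ, a) ) )². In fact one may take C = L and any β > max_γ sup_{w∈[0,1]^d} |λ^γ(w)|. -/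
open MeasureTheory Filter Set

noncomputable section

/-- A cumulative distribution function on ℝ: nondecreasing, right-continuous,
tending to `0` at `-∞` and to `1` at `+∞`. -/
def IsCDF (F : ℝ → ℝ) : Prop :=
  Monotone F ∧ (∀ x : ℝ, ContinuousWithinAt F (Ici x) x) ∧
    Tendsto F atBot (nhds 0) ∧ Tendsto F atTop (nhds 1)

/-- The pseudo-inverse `F⁻¹(v) = inf {x | v ≤ F x}` of a CDF. -/
def cdfInv (F : ℝ → ℝ) (v : ℝ) : ℝ := sInf {x : ℝ | v ≤ F x}

/-- The velocity function `λ^γ{u}(t,x)` obtained by averaging the `γ`-th coordinate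
between the left limit `u^γ(t,x⁻)` and the value `u^γ(t,x)`. -/
def lamBrace {d : ℕ} (lam : Fin d → (Fin d → ℝ) → ℝ)
    (u : Fin d → ℝ → ℝ → ℝ) (γ : Fin d) (t x : ℝ) : ℝ :=
  ∫ θ in (0:ℝ)..1,
    lam γ (Function.update (fun γ' => u γ' t x) γ
      ((1 - θ) * Function.leftLim (u γ t) x + θ * u γ t x))

/-- A test function `φ` of class `C^{1,0}_c`: continuous, compactly supported,
with continuous time derivative `φt`. -/
def IsTestFun (φ φt : ℝ → ℝ → ℝ) : Prop :=
  Continuous (fun p : ℝ × ℝ => φ p.1 p.2) ∧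
    HasCompactSupport (fun p : ℝ × ℝ => φ p.1 p.2) ∧
    Continuous (fun p : ℝ × ℝ => φt p.1 p.2) ∧
    ∀ t x : ℝ, HasDerivAt (fun s => φ s x) (φt t x) t

/-- A probabilistic solution to the diagonal hyperbolic system
`∂_t u^γ + λ^γ(u) ∂_x u^γ = 0` with initial data `u0`. -/
def IsProbSol {d : ℕ} (lam : Fin d → (Fin d → ℝ) → ℝ)
    (u : Fin d → ℝ → ℝ → ℝ) (u0 : Fin d → ℝ → ℝ) : Prop :=
  (∀ γ : Fin d, Measurable fun p : Ici (0:ℝ) × ℝ => u γ (p.1 : ℝ) p.2) ∧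
  (∀ (γ : Fin d) (t : ℝ), 0 ≤ t → IsCDF (u γ t)) ∧
  (∀ γ : Fin d, IsCDF (u0 γ)) ∧
  ∃ μ : Fin d → ℝ → Measure ℝ,
    (∀ (γ : Fin d) (t : ℝ), IsProbabilityMeasure (μ γ t)) ∧
    (∀ (γ : Fin d) (t : ℝ), 0 ≤ t → ∀ x : ℝ, (μ γ t (Iic x)).toReal = u γ t x) ∧
    ∀ φ φt : Fin d → ℝ → ℝ → ℝ, (∀ γ, IsTestFun (φ γ) (φt γ)) →
      (∑ γ : Fin d, ((∫ t in Ici (0:ℝ), ∫ x : ℝ, φt γ t x * u γ t x) +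
          ∫ x : ℝ, φ γ 0 x * u0 γ x))
        = ∑ γ : Fin d,
            ∫ t in Ici (0:ℝ), ∫ x : ℝ, φ γ t x * lamBrace lam u γ t x ∂(μ γ t)

/-- Continuity of `t ↦ u(t,·)` in `L¹_loc(ℝ)^d` on `[0,∞)`. -/
def ContL1loc {d : ℕ} (u : Fin d → ℝ → ℝ → ℝ) : Prop :=
  ∀ (γ : Fin d) (a b t₀ : ℝ), 0 ≤ t₀ →
    Tendsto (fun t => ∫ x in Icc a b, |u γ t x - u γ t₀ x|)
      (nhdsWithin t₀ (Ici 0)) (nhds 0)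

/-!
In the frame moving at speed `c`, a test function is transported without deformation: for a
probabilistic solution of one scalar equation, `∫ ψ(x - c t) u(t,x) dx` has time derivative
`∫ ψ(x - c t) (c - λ{u}(t,x)) μ_t(dx)`, in the sense of distributions.

Taking `c = ± β` and `ψ ≥ 0` gives finite speed of propagation: inside the cone
`a + β (t - τ) < x < b - β (t - τ)` each `u^γ` stays between `u^γ(τ,a)` and `u^γ(τ,b⁻)`, and `μ^γ_t`
gives the section of the cone at most the mass `u^γ(τ,b⁻) - u^γ(τ,a)`. By (LC), `λ^γ{u}` therefore
differs from the frozen speed by at most `L D` on the cone, `D = Σ_γ (u^γ(τ,b⁻) - u^γ(τ,a))`.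

Taking for `c` the frozen speed and `|ψ| ≤ 1`, duality bounds the `L¹` distance between `u^γ(τ+h,·)`
and the translate of `u^γ(τ,·)` by `L D (u^γ(τ,b⁻) - u^γ(τ,a)) h`. Summing over `γ` gives `L D² h`.
-/

open ProbabilityTheory Topology
open scoped ContDiff Pointwise

section Mollification

variable {E : Type*} [NormedAddCommGroup E]

/-- A sequence of bump functions at the origin with radii tending to `0`, used for mollification. -/
def mollifier (E : Type*) [NormedAddCommGroup E] (n : ℕ) : ContDiffBump (0 : E) where
  rIn := 1 / (2 * (n + 1))
  rOut := 1 / (n + 1)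
  rIn_pos := by positivity
  rIn_lt_rOut := one_div_lt_one_div_of_lt (by positivity) (by linarith [n.cast_nonneg (α := ℝ)])

theorem tendsto_mollifier_rOut : Tendsto (fun n => (mollifier E n).rOut) atTop (𝓝 0) :=
  tendsto_one_div_add_atTop_nhds_zero_nat

theorem mollifier_rOut_le (n : ℕ) : (mollifier E n).rOut ≤ 2 * (mollifier E n).rIn := by
  simp only [mollifier]
  field_simp
  rfl

variable [NormedSpace ℝ E] [FiniteDimensional ℝ E] [MeasurableSpace E] [BorelSpace E]
  {μ : Measure E} [μ.IsAddHaarMeasure] {K U : Set E}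

theorem exists_seq_contDiff_tendsto_ae (hK : IsCompact K) (hU : IsOpen U) (hKU : K ⊆ U)
    {g : E → ℝ} (hg : AEStronglyMeasurable g μ) (hg1 : ∀ x, |g x| ≤ 1)
    (hgK : Function.support g ⊆ K) :
    ∃ ψ : ℕ → E → ℝ, (∀ n, ContDiff ℝ ∞ (ψ n)) ∧ (∀ n, HasCompactSupport (ψ n)) ∧
      (∀ n, tsupport (ψ n) ⊆ U) ∧ (∀ n x, |ψ n x| ≤ 1) ∧
      ∀ᵐ x ∂μ, Tendsto (fun n => ψ n x) atTop (𝓝 (g x)) := by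
  obtain ⟨δ, hδ, hδU⟩ := hK.exists_cthickening_subset_open hU hKU
  obtain ⟨N, hN⟩ := eventually_atTop.1 (tendsto_mollifier_rOut (E := E) |>.eventually_le_const hδ)
  have hg_int : LocallyIntegrable g μ :=
    (locallyIntegrable_const (1 : ℝ)).mono hg (Eventually.of_forall fun x => by simpa using hg1 x)
  let ρ (n : ℕ) := mollifier E (n + N)
  let ψ (n : ℕ) : E → ℝ := convolution ((ρ n).normed μ) g (ContinuousLinearMap.lsmul ℝ ℝ) μ
  have h_supp (n : ℕ) : Function.support (ψ n) ⊆ Metric.cthickening δ K := by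
    have h_rOut : (ρ n).rOut ≤ δ := hN _ (Nat.le_add_left N n)
    calc Function.support (ψ n)
        ⊆ Function.support g + Metric.ball 0 (ρ n).rOut := by
          rw [← (ρ n).support_normed_eq (μ := μ)]
          exact support_convolution_subset_swap (ContinuousLinearMap.lsmul ℝ ℝ)
      _ ⊆ K + Metric.ball 0 δ := add_subset_add hgK (Metric.ball_subset_ball h_rOut)
      _ = Metric.thickening δ K := add_ball_zero δ K
      _ ⊆ Metric.cthickening δ K := Metric.thickening_subset_cthickening δ K
  refine ⟨ψ, fun n => ?_, fun n => ?_, fun n => ?_, fun n x => ?_, ?_⟩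
  · exact (ρ n).hasCompactSupport_normed.contDiff_convolution_left _ (ρ n).contDiff_normed hg_int
  · exact HasCompactSupport.of_support_subset_isCompact hK.cthickening (h_supp n)
  · exact (closure_minimal (h_supp n) Metric.isClosed_cthickening).trans hδU
  · simpa using dist_convolution_le (μ := μ) (x₀ := x) (z₀ := (0 : ℝ)) zero_le_one
      (ρ n).support_normed_eq.subset (ρ n).nonneg_normed (ρ n).integral_normed hg
      (fun y _ => by simpa using hg1 y)
  · exact ContDiffBump.ae_convolution_tendsto_right_of_locallyIntegrable
      (tendsto_mollifier_rOut.comp (tendsto_add_atTop_nat N))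
      (Eventually.of_forall fun n => mollifier_rOut_le (n + N)) hg_int

theorem setIntegral_abs_le_of_forall_contDiff_of_isCompact {f : E → ℝ} {M : ℝ} (hU : IsOpen U)
    (hK : IsCompact K) (hKU : K ⊆ U) (hf : IntegrableOn f U μ)
    (h : ∀ ψ : E → ℝ, ContDiff ℝ ∞ ψ → HasCompactSupport ψ → tsupport ψ ⊆ U →
      (∀ x, |ψ x| ≤ 1) → ∫ x in U, ψ x * f x ∂μ ≤ M) :
    ∫ x in K, |f x| ∂μ ≤ M := by
  let g : E → ℝ := K.indicator fun x => f x / |f x|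
  have hg : AEStronglyMeasurable g μ := by
    have hfK := (hf.mono_set hKU).aemeasurable
    exact ((aemeasurable_indicator_iff hK.measurableSet).2
      (hfK.div hfK.abs)).aestronglyMeasurable
  have hg1 (x : E) : |g x| ≤ 1 := by
    by_cases hx : x ∈ K
    · simpa [g, hx, abs_div] using div_self_le_one |f x|
    · simp [g, hx]
  obtain ⟨ψ, hψ, hψc, hψU, hψ1, hψg⟩ :=
    exists_seq_contDiff_tendsto_ae hK hU hKU hg hg1 support_indicator_subset
  have h_lim : Tendsto (fun n => ∫ x in U, ψ n x * f x ∂μ) atTop (𝓝 (∫ x in U, g x * f x ∂μ)) := by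
    refine tendsto_integral_of_dominated_convergence (fun x => |f x|) (fun n => ?_) hf.abs
      (fun n => Eventually.of_forall fun x => ?_) ?_
    · exact (hψ n).continuous.aestronglyMeasurable.mul hf.aestronglyMeasurable
    · simpa [abs_mul] using mul_le_of_le_one_left (abs_nonneg (f x)) (hψ1 n x)
    · filter_upwards [ae_restrict_of_ae hψg] with x hx using hx.mul_const (f x)
  have h_eq : ∫ x in U, g x * f x ∂μ = ∫ x in K, |f x| ∂μ := by
    have h_mul (x : E) : g x * f x = K.indicator (fun x => |f x|) x := by
      by_cases hx : x ∈ K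
      · simp only [g, indicator_of_mem hx]
        rw [div_mul_eq_mul_div, ← abs_mul_abs_self, mul_self_div_self]
      · simp [g, hx]
    simp_rw [h_mul]
    rw [setIntegral_indicator hK.measurableSet, inter_eq_self_of_subset_right hKU]
  exact h_eq ▸ le_of_tendsto' h_lim fun n => h (ψ n) (hψ n) (hψc n) (hψU n) (hψ1 n)

theorem setIntegral_abs_le_of_forall_contDiff {f : E → ℝ} {M : ℝ} (hU : IsOpen U)
    (hf : IntegrableOn f U μ)
    (h : ∀ ψ : E → ℝ, ContDiff ℝ ∞ ψ → HasCompactSupport ψ → tsupport ψ ⊆ U →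
      (∀ x, |ψ x| ≤ 1) → ∫ x in U, ψ x * f x ∂μ ≤ M) :
    ∫ x in U, |f x| ∂μ ≤ M := by
  obtain ⟨F, hF_closed, hFU, hF_iUnion, hF_mono⟩ := hU.exists_iUnion_isClosed
  let K (n : ℕ) : Set E := F n ∩ Metric.closedBall 0 n
  have hK (n : ℕ) : IsCompact (K n) := (isCompact_closedBall 0 _).inter_left (hF_closed n)
  have hKU (n : ℕ) : K n ⊆ U := inter_subset_left.trans (hFU n)
  have hK_mono : Monotone K := fun m n hmn =>
    inter_subset_inter (hF_mono hmn) (Metric.closedBall_subset_closedBall (by exact_mod_cast hmn))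
  have hK_iUnion : ⋃ n, K n = U := by
    rw [iUnion_inter_of_monotone hF_mono
      fun m n hmn => Metric.closedBall_subset_closedBall (by exact_mod_cast hmn),
      hF_iUnion, Metric.iUnion_closedBall_nat, inter_univ]
  have h_lim := tendsto_setIntegral_of_monotone (fun n => (hK n).measurableSet) hK_mono
    (hK_iUnion.symm ▸ hf.abs)
  rw [hK_iUnion] at h_lim
  exact le_of_tendsto' h_lim fun n =>
    setIntegral_abs_le_of_forall_contDiff_of_isCompact hU (hK n) (hKU n) hf h

end Mollification

theorem nonpos_of_forall_integral_mul_nonpos {f : ℝ → ℝ}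
    (hf : ∀ x, ContinuousWithinAt f (Ici x) x) (hf_int : LocallyIntegrable f)
    (h : ∀ ψ : ℝ → ℝ, ContDiff ℝ ∞ ψ → HasCompactSupport ψ → (∀ x, 0 ≤ ψ x) →
      ∫ x, ψ x * f x ≤ 0) (x : ℝ) :
    f x ≤ 0 := by
  by_contra! hx
  obtain ⟨z, hxz, hz⟩ := mem_nhdsGE_iff_exists_Ico_subset.1 ((hf x).eventually (lt_mem_nhds hx))
  obtain ⟨ψ, hψ_supp, hψ, hψ_range⟩ :=
    (isOpen_Ioo (a := x) (b := z)).exists_contDiff_support_eq (n := ⊤)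
  have hψ0 (y : ℝ) : 0 ≤ ψ y := (hψ_range (mem_range_self y)).1
  have hψc : HasCompactSupport ψ := .of_support_subset_isCompact isCompact_Icc
    (hψ_supp.subset.trans Ioo_subset_Icc_self)
  have h_supp : Function.support (fun y => ψ y * f y) = Ioo x z := by
    rw [Function.support_mul, hψ_supp, inter_eq_left]
    exact fun y hy => (hz (Ioo_subset_Ico_self hy)).ne'
  have h_nonneg (y : ℝ) : 0 ≤ ψ y * f y := by
    by_cases hy : y ∈ Ioo x z
    · exact mul_nonneg (hψ0 y) (hz (Ioo_subset_Ico_self hy)).le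
    · rw [← hψ_supp, Function.notMem_support] at hy
      simp [hy]
  refine (h ψ hψ hψc hψ0).not_gt ?_
  rw [integral_pos_iff_support_of_nonneg h_nonneg
    (hf_int.integrable_smul_left_of_hasCompactSupport hψ.continuous hψc), h_supp]
  simpa using hxz

theorem deriv_normed_convolution_le (φ : ContDiffBump (0 : ℝ)) {G : ℝ → ℝ} {s t M : ℝ}
    (hG : Continuous G)
    (h : ∀ η : ℝ → ℝ, ContDiff ℝ ∞ η → HasCompactSupport η → tsupport η ⊆ Ioo s t →
      (∀ r, 0 ≤ η r) → -∫ r, deriv η r * G r ≤ M * ∫ r, η r)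
    {r : ℝ} (hr : Metric.closedBall r φ.rOut ⊆ Ioo s t) :
    deriv (convolution (φ.normed volume) G (ContinuousLinearMap.lsmul ℝ ℝ) volume) r ≤ M := by
  let η : ℝ → ℝ := fun y => φ.normed volume (r - y)
  have hη : ContDiff ℝ ∞ η := φ.contDiff_normed.comp (contDiff_const.sub contDiff_id)
  have hη_supp : tsupport η ⊆ Metric.closedBall r φ.rOut := by
    refine closure_minimal (fun y hy => ?_) Metric.isClosed_closedBall
    have hy' : r - y ∈ Function.support (φ.normed volume) := hy
    rw [φ.support_normed_eq, mem_ball_zero_iff, ← dist_eq_norm, dist_comm] at hy'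
    exact hy'.le
  have h_deriv : deriv (convolution (φ.normed volume) G (ContinuousLinearMap.lsmul ℝ ℝ) volume) r
      = -∫ y, deriv η y * G y := by
    rw [(φ.hasCompactSupport_normed.hasDerivAt_convolution_left _ φ.contDiff_normed
      hG.locallyIntegrable r).deriv, convolution_eq_swap, ← integral_neg]
    simp only [η, deriv_comp_const_sub, ContinuousLinearMap.lsmul_apply, smul_eq_mul, neg_mul,
      neg_neg]
  have hη_int : ∫ y, η y = 1 := by
    simp only [η, integral_sub_left_eq_self (φ.normed volume) volume r, φ.integral_normed]
  calc deriv (convolution (φ.normed volume) G (ContinuousLinearMap.lsmul ℝ ℝ) volume) r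
      ≤ M * ∫ y, η y := h_deriv ▸ h η hη
        (.of_support_subset_isCompact (isCompact_closedBall r _) (subset_closure.trans hη_supp))
        (hη_supp.trans hr) (fun y => φ.nonneg_normed (r - y))
    _ = M := by rw [hη_int, mul_one]

theorem sub_le_mul_sub_of_forall_integral_deriv_mul {G : ℝ → ℝ} {s t M : ℝ} (hG : Continuous G)
    (hst : s < t)
    (h : ∀ η : ℝ → ℝ, ContDiff ℝ ∞ η → HasCompactSupport η → tsupport η ⊆ Ioo s t →
      (∀ r, 0 ≤ η r) → -∫ r, deriv η r * G r ≤ M * ∫ r, η r) :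
    G t - G s ≤ M * (t - s) := by
  have h_interior {p q : ℝ} (hsp : s < p) (hqt : q < t) (hpq : p ≤ q) :
      G q - G p ≤ M * (q - p) := by
    let Gρ (n : ℕ) : ℝ → ℝ := convolution ((mollifier ℝ n).normed volume) G
      (ContinuousLinearMap.lsmul ℝ ℝ) volume
    have h_lim (r : ℝ) : Tendsto (fun n => Gρ n r) atTop (𝓝 (G r)) :=
      ContDiffBump.convolution_tendsto_right_of_continuous tendsto_mollifier_rOut hG r
    have h_diff (n : ℕ) : Differentiable ℝ (Gρ n) :=
      ((mollifier ℝ n).hasCompactSupport_normed.contDiff_convolution_left _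
        (mollifier ℝ n).contDiff_normed hG.locallyIntegrable).differentiable one_ne_zero
    refine le_of_tendsto ((h_lim q).sub (h_lim p)) ?_
    filter_upwards [(tendsto_mollifier_rOut (E := ℝ)).eventually_lt_const
      (lt_min (sub_pos.2 hsp) (sub_pos.2 hqt))] with n hn
    rw [lt_min_iff] at hn
    refine (convex_Icc p q).image_sub_le_mul_sub_of_deriv_le (h_diff n).continuous.continuousOn
      (h_diff n).differentiableOn (fun r hr => ?_) p ⟨le_rfl, hpq⟩ q ⟨hpq, le_rfl⟩ hpq
    have hr' := interior_subset hr
    refine deriv_normed_convolution_le _ hG h ?_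
    rw [Real.closedBall_eq_Icc]
    exact Icc_subset_Ioo (by linarith [hr'.1]) (by linarith [hr'.2])
  have h_cont : Continuous fun ε => G (t - ε) - G (s + ε) - M * ((t - ε) - (s + ε)) := by fun_prop
  have h_lim := (h_cont.tendsto 0).mono_left (nhdsWithin_le_nhds (s := Ioi 0))
  simp only [sub_zero, add_zero] at h_lim
  refine sub_nonpos.1 (le_of_tendsto h_lim ?_)
  filter_upwards [Ioo_mem_nhdsGT (half_pos (sub_pos.2 hst))] with ε hε
  exact sub_nonpos.2 (h_interior (by linarith [hε.1]) (by linarith [hε.1]) (by linarith [hε.2]))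

theorem integral_deriv_mul_cdf (m : Measure ℝ) [IsProbabilityMeasure m] {ψ : ℝ → ℝ}
    (hψ : ContDiff ℝ 1 ψ) (hψc : HasCompactSupport ψ) :
    ∫ x, deriv ψ x * cdf m x = -∫ x, ψ x ∂m := by
  have h_int : Integrable (Function.uncurry fun x y => deriv ψ x * (Iic x).indicator 1 y)
      (volume.prod m) := by
    have h_deriv : Integrable (deriv ψ) :=
      (hψ.continuous_deriv le_rfl).integrable_of_hasCompactSupport hψc.deriv
    have h_meas : Measurable fun p : ℝ × ℝ => (Iic p.1).indicator (1 : ℝ → ℝ) p.2 :=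
      measurable_one.indicator (measurableSet_le measurable_snd measurable_fst)
    refine (h_deriv.comp_fst m).mul_bdd (c := 1) h_meas.aestronglyMeasurable
      (Eventually.of_forall fun p => ?_)
    exact (norm_indicator_le_norm_self _ _).trans_eq (by simp)
  calc ∫ x, deriv ψ x * cdf m x
      = ∫ x, ∫ y, deriv ψ x * (Iic x).indicator (1 : ℝ → ℝ) y ∂m := by
        simp_rw [integral_const_mul, integral_indicator_one measurableSet_Iic, cdf_eq_real]
    _ = ∫ y, (∫ x, deriv ψ x * (Iic x).indicator (1 : ℝ → ℝ) y) ∂m := integral_integral_swap h_int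
    _ = ∫ y, -ψ y ∂m := by
        refine integral_congr_ae (Eventually.of_forall fun y => ?_)
        calc ∫ x, deriv ψ x * (Iic x).indicator (1 : ℝ → ℝ) y
            = ∫ x in Ici y, deriv ψ x := by
              rw [← integral_indicator measurableSet_Ici]
              exact integral_congr_ae (Eventually.of_forall fun x => by simp [indicator])
          _ = -ψ y := by
              rw [integral_Ici_eq_integral_Ioi, hψc.integral_Ioi_deriv_eq hψ y]
    _ = -∫ x, ψ x ∂m := integral_neg ψ

theorem abs_integral_mul_sub_integral_mul_le {α : Type*} [MeasurableSpace α] {μ : Measure α}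
    {f₁ f₂ g₁ g₂ : α → ℝ} {C : ℝ} (hg₁ : Integrable g₁ μ) (hg₂ : Integrable g₂ μ)
    (hf₁ : Integrable f₁ μ) (hf₂ : Integrable f₂ μ) (hf₁1 : ∀ x, |f₁ x| ≤ 1)
    (hg₂C : ∀ x, |g₂ x| ≤ C) :
    |∫ x, g₁ x * f₁ x ∂μ - ∫ x, g₂ x * f₂ x ∂μ| ≤
      ∫ x, |g₁ x - g₂ x| ∂μ + C * ∫ x, |f₁ x - f₂ x| ∂μ := by
  have h₁ : Integrable (fun x => g₁ x * f₁ x) μ :=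
    hg₁.mul_bdd hf₁.aestronglyMeasurable (Eventually.of_forall hf₁1)
  have h₂ : Integrable (fun x => g₂ x * f₂ x) μ :=
    hf₂.bdd_mul hg₂.aestronglyMeasurable (Eventually.of_forall hg₂C)
  have hg : Integrable (fun x => |g₁ x - g₂ x|) μ := (hg₁.sub hg₂).abs
  have hf : Integrable (fun x => C * |f₁ x - f₂ x|) μ := (hf₁.sub hf₂).abs.const_mul C
  calc |∫ x, g₁ x * f₁ x ∂μ - ∫ x, g₂ x * f₂ x ∂μ|
      = |∫ x, (g₁ x * f₁ x - g₂ x * f₂ x) ∂μ| := by rw [integral_sub h₁ h₂]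
    _ ≤ ∫ x, |g₁ x * f₁ x - g₂ x * f₂ x| ∂μ := abs_integral_le_integral_abs
    _ ≤ ∫ x, (|g₁ x - g₂ x| + C * |f₁ x - f₂ x|) ∂μ := by
      refine integral_mono (h₁.sub h₂).abs (hg.add hf) fun x => ?_
      calc |g₁ x * f₁ x - g₂ x * f₂ x|
          = |(g₁ x - g₂ x) * f₁ x + g₂ x * (f₁ x - f₂ x)| := by ring_nf
        _ ≤ |g₁ x - g₂ x| * |f₁ x| + |g₂ x| * |f₁ x - f₂ x| := by
          simpa only [abs_mul] using abs_add_le ((g₁ x - g₂ x) * f₁ x) (g₂ x * (f₁ x - f₂ x))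
        _ ≤ |g₁ x - g₂ x| + C * |f₁ x - f₂ x| :=
          add_le_add (mul_le_of_le_one_right (abs_nonneg _) (hf₁1 x))
            (mul_le_mul_of_nonneg_right (hg₂C x) (abs_nonneg _))
    _ = _ := by rw [integral_add hg hf, integral_const_mul]

theorem continuous_integral_comp_sub_mul {f : ℝ → ℝ → ℝ} {ψ : ℝ → ℝ} (c : ℝ)
    (hψ : Continuous ψ) (hψc : HasCompactSupport ψ) (hf_meas : ∀ r, Measurable (f r))
    (hf1 : ∀ r x, |f r x| ≤ 1)
    (hf : ∀ a b r₀, Tendsto (fun r => ∫ x in Icc a b, |f r x - f r₀ x|) (𝓝 r₀) (𝓝 0)) :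
    Continuous fun r => ∫ x, ψ (x - c * r) * f r x := by
  refine continuous_iff_continuousAt.2 fun r₀ => ?_
  obtain ⟨a, b, hab⟩ : ∃ a b, ∀ r ∈ Metric.closedBall r₀ 1,
      ∀ x ∉ Icc a b, ψ (x - c * r) = 0 := by
    have h_compact : IsCompact ((fun p : ℝ × ℝ => p.2 + c * p.1) ''
        Metric.closedBall r₀ 1 ×ˢ tsupport ψ) :=
      ((isCompact_closedBall r₀ 1).prod hψc).image (by fun_prop)
    obtain ⟨a, b, hab⟩ := bddBelow_bddAbove_iff_subset_Icc.1
      ⟨h_compact.bddBelow, h_compact.bddAbove⟩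
    refine ⟨a, b, fun r hr x hx => ?_⟩
    by_contra h
    exact hx (hab ⟨(r, x - c * r), ⟨hr, subset_tsupport ψ h⟩, by simp⟩)
  obtain ⟨C, hC⟩ := hψ.bounded_above_of_compact_support hψc
  have h_int (r : ℝ) : IntegrableOn (f r) (Icc a b) :=
    Measure.integrableOn_of_bounded (M := 1) (by simp) (hf_meas r).aestronglyMeasurable
      (Eventually.of_forall (hf1 r))
  have h_eq {r : ℝ} (hr : r ∈ Metric.closedBall r₀ 1) :
      ∫ x in Icc a b, ψ (x - c * r) * f r x = ∫ x, ψ (x - c * r) * f r x :=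
    setIntegral_eq_integral_of_forall_compl_eq_zero fun x hx => by simp [hab r hr x hx]
  have h_ψ_int (r : ℝ) : IntegrableOn (fun x => ψ (x - c * r)) (Icc a b) :=
    Continuous.integrableOn_Icc (by fun_prop)
  have h_ψ : Tendsto (fun r => ∫ x in Icc a b, |ψ (x - c * r) - ψ (x - c * r₀)|)
      (𝓝 r₀) (𝓝 0) := by
    have : Continuous fun r => ∫ x in Icc a b, |ψ (x - c * r) - ψ (x - c * r₀)| :=
      continuous_parametric_integral_of_continuous (by fun_prop) isCompact_Icc
    simpa using this.tendsto r₀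
  refine tendsto_iff_dist_tendsto_zero.2 (squeeze_zero' (Eventually.of_forall fun _ => dist_nonneg)
    ?_ (by simpa using h_ψ.add ((hf a b r₀).const_mul C)))
  filter_upwards [Metric.closedBall_mem_nhds r₀ one_pos] with r hr
  rw [Real.dist_eq, ← h_eq hr, ← h_eq (Metric.mem_closedBall_self zero_le_one)]
  exact abs_integral_mul_sub_integral_mul_le (h_ψ_int r) (h_ψ_int r₀) (h_int r) (h_int r₀)
    (hf1 r) fun x => hC _

theorem integrable_mul_integral_kernel {α β : Type*} [MeasurableSpace α] [MeasurableSpace β]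
    {μ : Measure α} {κ : Kernel α β} [IsMarkovKernel κ] {η : α → ℝ} {f : α → β → ℝ} {C : ℝ}
    (hη : Integrable η μ) (hf : Measurable (Function.uncurry f)) (hfC : ∀ r x, |f r x| ≤ C) :
    Integrable (fun r => η r * ∫ x, f r x ∂κ r) μ := by
  refine hη.mul_bdd (c := C)
    (hf.stronglyMeasurable.integral_kernel_prod_right').aestronglyMeasurable
    (Eventually.of_forall fun r => ?_)
  simpa using norm_integral_le_of_norm_le_const (μ := κ r) (f := f r) (Eventually.of_forall (hfC r))

theorem measurable_uncurry_leftLim {α : Type*} [MeasurableSpace α] {v : α → ℝ → ℝ}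
    (hv : Measurable (Function.uncurry v)) (hv_mono : ∀ r, Monotone (v r)) :
    Measurable (Function.uncurry fun r => Function.leftLim (v r)) := by
  refine measurable_of_tendsto_metrizable
    (f := fun (n : ℕ) (p : α × ℝ) => v p.1 (p.2 - 1 / ((n : ℝ) + 1)))
    (fun n => hv.comp (measurable_fst.prodMk (measurable_snd.sub_const _)))
    (tendsto_pi_nhds.2 fun p => ((hv_mono p.1).tendsto_leftLim p.2).comp
      (tendsto_nhdsWithin_iff.2 ⟨?_, Eventually.of_forall fun n => ?_⟩))
  · simpa using (tendsto_one_div_add_atTop_nhds_zero_nat (𝕜 := ℝ)).const_sub p.2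
  · exact sub_lt_self p.2 (one_div_pos.2 (n.cast_add_one_pos (α := ℝ)))

theorem measurable_of_measurable_measureReal_Iic {α : Type*} [MeasurableSpace α]
    {μ : α → Measure ℝ} [∀ r, IsProbabilityMeasure (μ r)]
    (h : ∀ x, Measurable fun r => (μ r).real (Iic x)) : Measurable μ := by
  refine .measure_of_isPiSystem_of_isProbabilityMeasure (borel_eq_generateFrom_Iic ℝ ▸
    BorelSpace.measurable_eq) isPiSystem_Iic ?_
  rintro _ ⟨x, rfl⟩
  simpa using (h x).ennreal_ofReal

theorem measureReal_Ioo_eq_leftLim_cdf_sub (m : Measure ℝ) [IsProbabilityMeasure m] {a b : ℝ}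
    (hab : a < b) : m.real (Ioo a b) = Function.leftLim (cdf m) b - cdf m a := by
  conv_lhs => rw [← measure_cdf m]
  rw [measureReal_def, StieltjesFunction.measure_Ioo,
    ENNReal.toReal_ofReal (sub_nonneg.2 ((monotone_cdf m).le_leftLim hab))]

theorem abs_integral_zero_one_le {f : ℝ → ℝ} {C : ℝ} (h : ∀ θ ∈ Icc (0 : ℝ) 1, |f θ| ≤ C) :
    |∫ θ in (0 : ℝ)..1, f θ| ≤ C := by
  simpa using intervalIntegral.norm_integral_le_of_norm_le_const (a := 0) (b := 1) (f := f)
    fun θ hθ => h θ (uIoc_subset_uIcc.trans_eq (uIcc_of_le zero_le_one) hθ)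

theorem limsup_one_div_mul_le {f : ℝ → ℝ} {C : ℝ} (hf : ∀ᶠ h in 𝓝[>] (0 : ℝ), f h ≤ C * h) :
    limsup (fun h => ((1 / h * f h : ℝ) : EReal)) (𝓝[>] 0) ≤ (C : EReal) := by
  refine limsup_le_of_le (by isBoundedDefault) ?_
  filter_upwards [hf, self_mem_nhdsWithin] with h hfh hh
  rwa [EReal.coe_le_coe_iff, one_div, inv_mul_le_iff₀ (mem_Ioi.1 hh), mul_comm]

theorem isTestFun_zero : IsTestFun (fun _ _ => 0) fun _ _ => 0 :=
  ⟨continuous_const, .zero, continuous_const, fun _ _ => hasDerivAt_const _ _⟩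

theorem abs_cdf_le_one (m : Measure ℝ) (x : ℝ) : |cdf m x| ≤ 1 :=
  (abs_of_nonneg (cdf_nonneg m x)).trans_le (cdf_le_one m x)

theorem isTestFun_mul_comp_sub_mul {η ψ : ℝ → ℝ} (hη : ContDiff ℝ 1 η) (hηc : HasCompactSupport η)
    (hψ : ContDiff ℝ 1 ψ) (hψc : HasCompactSupport ψ) (c : ℝ) :
    IsTestFun (fun t x => η t * ψ (x - c * t))
      (fun t x => deriv η t * ψ (x - c * t) - c * η t * deriv ψ (x - c * t)) := by
  have hη_cont := hη.continuous
  have hψ_cont := hψ.continuous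
  have : Continuous (deriv η) := hη.continuous_deriv le_rfl
  have : Continuous (deriv ψ) := hψ.continuous_deriv le_rfl
  refine ⟨by fun_prop, ?_, by fun_prop, fun t x => ?_⟩
  · refine .intro (K := (fun p : ℝ × ℝ => (p.1, p.2 + c * p.1)) '' tsupport η ×ˢ tsupport ψ)
      ((hηc.prod hψc).image (by fun_prop)) fun ⟨t, x⟩ hp => ?_
    by_contra h
    obtain ⟨hηt, hψx⟩ := mul_ne_zero_iff.1 h
    exact hp ⟨(t, x - c * t), ⟨subset_tsupport η hηt, subset_tsupport ψ hψx⟩, by simp⟩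
  · have hη' := (hη.differentiable one_ne_zero t).hasDerivAt
    have hψ' := (hψ.differentiable one_ne_zero (x - c * t)).hasDerivAt
    have h_frame : HasDerivAt (fun t => x - c * t) (-c) t := by
      simpa using ((hasDerivAt_id t).const_mul c).const_sub x
    convert! hη'.mul (hψ'.comp t h_frame) using 1
    simp only [Function.comp_apply]
    ring

theorem integral_timeDeriv_mul_cdf (m : Measure ℝ) [IsProbabilityMeasure m] {ψ : ℝ → ℝ}
    (hψ : ContDiff ℝ 1 ψ) (hψc : HasCompactSupport ψ) (p q r : ℝ) :
    ∫ x, (q * ψ (x - p) - r * deriv ψ (x - p)) * cdf m x =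
      q * (∫ x, ψ (x - p) * cdf m x) + r * ∫ x, ψ (x - p) ∂m := by
  have h_int {f : ℝ → ℝ} (hf : Continuous f) (hfc : HasCompactSupport f) :
      Integrable fun x => f (x - p) * cdf m x :=
    ((hf.integrable_of_hasCompactSupport hfc).comp_sub_right p).mul_bdd (c := 1)
      (monotone_cdf m).measurable.aestronglyMeasurable
      (Eventually.of_forall (abs_cdf_le_one m))
  have h_parts : ∫ x, deriv ψ (x - p) * cdf m x = -∫ x, ψ (x - p) ∂m := by
    simpa only [deriv_comp_sub_const] using integral_deriv_mul_cdf m (ψ := fun x => ψ (x - p))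
      (hψ.comp (contDiff_id.sub contDiff_const))
      (hψc.comp_homeomorph (Homeomorph.subRight p))
  calc ∫ x, (q * ψ (x - p) - r * deriv ψ (x - p)) * cdf m x
      = ∫ x, (q * (ψ (x - p) * cdf m x) - r * (deriv ψ (x - p) * cdf m x)) := by
        simp only [sub_mul, mul_assoc]
    _ = q * (∫ x, ψ (x - p) * cdf m x) - r * ∫ x, deriv ψ (x - p) * cdf m x := by
        rw [integral_sub ((h_int hψ.continuous hψc).const_mul q)
          ((h_int (hψ.continuous_deriv le_rfl) hψc.deriv).const_mul r), integral_const_mul,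
          integral_const_mul]
    _ = _ := by rw [h_parts]; ring

theorem continuousWithinAt_cdf_comp_add (m : Measure ℝ) (p x : ℝ) :
    ContinuousWithinAt (fun y => cdf m (y + p)) (Ici x) x :=
  ((cdf m).right_continuous (x + p)).comp (f := fun y => y + p) (by fun_prop)
    fun _ hy => add_le_add_left (mem_Ici.1 hy) p

theorem locallyIntegrable_cdf_sub_cdf (m m' : Measure ℝ) (p q : ℝ) :
    LocallyIntegrable fun y => cdf m (y + p) - cdf m' (y + q) :=
  ((monotone_cdf m).comp (monotone_id.add_const p)).locallyIntegrable.sub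
    ((monotone_cdf m').comp (monotone_id.add_const q)).locallyIntegrable

theorem integrable_mul_integral_comp_sub_mul {κ : Kernel ℝ ℝ} [IsMarkovKernel κ] {η ψ : ℝ → ℝ}
    {w : ℝ → ℝ → ℝ} {B : ℝ} (hη : Integrable η) (hψ : Continuous ψ) (hψc : HasCompactSupport ψ)
    (hw : Measurable (Function.uncurry w)) (hwB : ∀ t x, |w t x| ≤ B) (c : ℝ) :
    Integrable fun r => η r * ∫ x, ψ (x - c * r) * w r x ∂κ r := by
  obtain ⟨C, hC⟩ := hψ.bounded_above_of_compact_support hψc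
  refine integrable_mul_integral_kernel (C := C * B) hη ?_ fun r x => ?_
  · exact (hψ.measurable.comp (by fun_prop)).mul hw
  · rw [abs_mul]
    exact mul_le_mul (hC _) (hwB r x) (abs_nonneg _) ((norm_nonneg _).trans (hC 0))

/-- The curve of probability measures `t ↦ κ t` solves, for `t ≥ 0`, the scalar transport equation
`∂ₜv + l ∂ₓv = 0` with `v t = cdf (κ t)` and speed `l` bounded by `β`. Times range over all of `ℝ`
only to make `κ` a kernel: negative times do not enter the weak form. -/
structure IsTransportSolution (κ : Kernel ℝ ℝ) (l : ℝ → ℝ → ℝ) (β : ℝ) : Prop where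
  measurable_speed : Measurable (Function.uncurry l)
  abs_speed_le : ∀ t x, |l t x| ≤ β
  tendsto_integral_abs_sub : ∀ a b t₀,
    Tendsto (fun t => ∫ x in Icc a b, |cdf (κ t) x - cdf (κ t₀) x|) (𝓝 t₀) (𝓝 0)
  weak_form : ∀ φ φt, IsTestFun φ φt → (∀ x, φ 0 x = 0) →
    ∫ t in Ici (0 : ℝ), ∫ x, φt t x * cdf (κ t) x =
      ∫ t in Ici (0 : ℝ), ∫ x, φ t x * l t x ∂κ t

namespace IsTransportSolution

variable {κ : Kernel ℝ ℝ} {l : ℝ → ℝ → ℝ} {β : ℝ} {η ψ : ℝ → ℝ}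
  {a b c s t : ℝ}

theorem continuous_integral_movingFrame (hκ : IsTransportSolution κ l β) (hψ : Continuous ψ)
    (hψc : HasCompactSupport ψ) (c : ℝ) :
    Continuous fun r => ∫ x, ψ (x - c * r) * cdf (κ r) x :=
  continuous_integral_comp_sub_mul c hψ hψc (fun r => (monotone_cdf (κ r)).measurable)
    (fun r => abs_cdf_le_one (κ r)) hκ.tendsto_integral_abs_sub

theorem measurable_const_sub_speed (hκ : IsTransportSolution κ l β) (c : ℝ) :
    Measurable (Function.uncurry fun t x => c - l t x) :=
  hκ.measurable_speed.const_sub c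

theorem abs_const_sub_speed_le (hκ : IsTransportSolution κ l β) (c t x : ℝ) :
    |c - l t x| ≤ |c| + β :=
  (abs_sub _ _).trans (add_le_add_right (hκ.abs_speed_le t x) _)

variable [IsMarkovKernel κ]

theorem integral_movingFrame_slice (hκ : IsTransportSolution κ l β) (hψ : ContDiff ℝ 1 ψ)
    (hψc : HasCompactSupport ψ) (c p q r : ℝ) :
    ∫ x, (q * ψ (x - c * r) - c * p * deriv ψ (x - c * r)) * cdf (κ r) x =
      q * (∫ x, ψ (x - c * r) * cdf (κ r) x) +
        p * (∫ x, ψ (x - c * r) * (c - l r x) ∂κ r) + ∫ x, p * ψ (x - c * r) * l r x ∂κ r := by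
  have hψ_cont := hψ.continuous
  obtain ⟨C, hC⟩ := hψ_cont.bounded_above_of_compact_support hψc
  have h_int : Integrable (fun x => ψ (x - c * r)) (κ r) :=
    .of_bound (by fun_prop) C (Eventually.of_forall fun x => hC _)
  have h_int_speed : Integrable (fun x => ψ (x - c * r) * l r x) (κ r) :=
    h_int.mul_bdd (c := β) hκ.measurable_speed.of_uncurry_left.aestronglyMeasurable
      (Eventually.of_forall (hκ.abs_speed_le r))
  simp only [mul_sub, mul_assoc p]
  rw [integral_timeDeriv_mul_cdf (κ r) hψ hψc, integral_sub (h_int.mul_const c) h_int_speed,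
    integral_mul_const, integral_const_mul]
  ring

theorem integral_deriv_mul_movingFrame (hκ : IsTransportSolution κ l β) (hη : ContDiff ℝ 1 η)
    (hηc : HasCompactSupport η) (hη_pos : Function.support η ⊆ Ioi 0) (hψ : ContDiff ℝ 1 ψ)
    (hψc : HasCompactSupport ψ) (c : ℝ) :
    ∫ r, deriv η r * ∫ x, ψ (x - c * r) * cdf (κ r) x =
      -∫ r, η r * ∫ x, ψ (x - c * r) * (c - l r x) ∂κ r := by
  let G (r : ℝ) := ∫ x, ψ (x - c * r) * cdf (κ r) x
  let S (r : ℝ) := ∫ x, ψ (x - c * r) * (c - l r x) ∂κ r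
  let Q (r : ℝ) := ∫ x, η r * ψ (x - c * r) * l r x ∂κ r
  have hη_zero {r : ℝ} (hr : r ∉ Ioi 0) : η r = 0 :=
    Function.notMem_support.1 fun h => hr (hη_pos h)
  have hη'_zero {r : ℝ} (hr : r ∉ Ici 0) : deriv η r = 0 :=
    Function.notMem_support.1 fun h =>
      hr (closure_minimal (hη_pos.trans Ioi_subset_Ici_self) isClosed_Ici (support_deriv_subset h))
  have h_weak : ∫ r in Ici (0 : ℝ), (deriv η r * G r + η r * S r + Q r) =
      ∫ r in Ici (0 : ℝ), Q r := by
    simpa only [hκ.integral_movingFrame_slice hψ hψc] using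
      hκ.weak_form _ _ (isTestFun_mul_comp_sub_mul hη hηc hψ hψc c)
        fun x => by simp [hη_zero self_notMem_Ioi]
  have hQ_zero {r : ℝ} (hr : r ∉ Ici 0) : Q r = 0 := by
    simp [Q, hη_zero fun h => hr (Ioi_subset_Ici_self h)]
  rw [setIntegral_eq_integral_of_forall_compl_eq_zero fun r hr => hQ_zero hr,
    setIntegral_eq_integral_of_forall_compl_eq_zero fun r hr => by
      rw [hη'_zero hr, hη_zero fun h => hr (Ioi_subset_Ici_self h), hQ_zero hr]; simp] at h_weak
  have hη_int : Integrable η := hη.continuous.integrable_of_hasCompactSupport hηc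
  have hG_int : Integrable fun r => deriv η r * G r :=
    ((hη.continuous_deriv le_rfl).mul (hκ.continuous_integral_movingFrame hψ.continuous hψc c)
      ).integrable_of_hasCompactSupport hηc.deriv.mul_right
  have hS_int : Integrable fun r => η r * S r :=
    integrable_mul_integral_comp_sub_mul hη_int hψ.continuous hψc
      (hκ.measurable_const_sub_speed c) (hκ.abs_const_sub_speed_le c) c
  have hQ_int : Integrable Q := by
    simpa only [Q, mul_assoc, integral_const_mul] using integrable_mul_integral_comp_sub_mul hη_int
      hψ.continuous hψc hκ.measurable_speed hκ.abs_speed_le c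
  have hGS_int : Integrable fun r => deriv η r * G r + η r * S r := hG_int.add hS_int
  rw [integral_add hGS_int hQ_int, integral_add hG_int hS_int] at h_weak
  exact eq_neg_of_add_eq_zero_left (add_eq_right.1 h_weak)

theorem integral_movingFrame_sub_le (hκ : IsTransportSolution κ l β) (hψ : ContDiff ℝ 1 ψ)
    (hψc : HasCompactSupport ψ) (hs : 0 ≤ s) (hst : s < t) {M : ℝ}
    (hM : ∀ r ∈ Ioo s t, ∫ x, ψ (x - c * r) * (c - l r x) ∂κ r ≤ M) :
    ∫ y, ψ y * (cdf (κ t) (y + c * t) - cdf (κ s) (y + c * s)) ≤ M * (t - s) := by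
  have h_int (r : ℝ) : Integrable fun y => ψ y * cdf (κ r) (y + c * r) :=
    (hψ.continuous.integrable_of_hasCompactSupport hψc).mul_bdd (c := 1)
      ((monotone_cdf (κ r)).measurable.comp (measurable_add_const _)).aestronglyMeasurable
      (Eventually.of_forall fun x => abs_cdf_le_one (κ r) _)
  have h_shift (r : ℝ) :
      ∫ y, ψ y * cdf (κ r) (y + c * r) = ∫ x, ψ (x - c * r) * cdf (κ r) x := by
    simpa using integral_add_right_eq_self (fun x => ψ (x - c * r) * cdf (κ r) x) (c * r)
  have h_sub : ∫ y, ψ y * (cdf (κ t) (y + c * t) - cdf (κ s) (y + c * s)) =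
      (∫ x, ψ (x - c * t) * cdf (κ t) x) - ∫ x, ψ (x - c * s) * cdf (κ s) x := by
    simp_rw [mul_sub]
    rw [integral_sub (h_int t) (h_int s), h_shift, h_shift]
  rw [h_sub]
  refine sub_le_mul_sub_of_forall_integral_deriv_mul
    (hκ.continuous_integral_movingFrame hψ.continuous hψc c) hst fun η hη hηc hη_supp hη0 => ?_
  have hη_int : Integrable η := hη.continuous.integrable_of_hasCompactSupport hηc
  have hη_Ioo := (subset_tsupport η).trans hη_supp
  rw [hκ.integral_deriv_mul_movingFrame (hη.of_le (by simp)) hηc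
    (hη_Ioo.trans fun r hr => hs.trans_lt hr.1) hψ hψc, neg_neg, ← integral_const_mul]
  refine integral_mono (integrable_mul_integral_comp_sub_mul hη_int hψ.continuous hψc
      (hκ.measurable_const_sub_speed c) (hκ.abs_const_sub_speed_le c) c)
    (hη_int.const_mul M) fun r => ?_
  by_cases hr : r ∈ Ioo s t
  · exact (mul_le_mul_of_nonneg_left (hM r hr) (hη0 r)).trans_eq (mul_comm _ _)
  · simp [Function.notMem_support.1 fun h => hr (hη_Ioo h)]

theorem cdf_le_cdf_add (hκ : IsTransportSolution κ l β) (hs : 0 ≤ s) (hst : s ≤ t) (x : ℝ) :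
    cdf (κ s) x ≤ cdf (κ t) (x + β * (t - s)) := by
  rcases hst.eq_or_lt with rfl | hst
  · simp
  have h := nonpos_of_forall_integral_mul_nonpos
    (f := fun y => cdf (κ s) (y + β * s) - cdf (κ t) (y + β * t))
    (fun y => (continuousWithinAt_cdf_comp_add (κ s) _ y).sub
      (continuousWithinAt_cdf_comp_add (κ t) _ y))
    (locallyIntegrable_cdf_sub_cdf _ _ _ _) (fun ψ hψ hψc hψ0 => ?_) (x - β * s)
  · convert sub_nonpos.1 h using 2 <;> ring
  · have h := hκ.integral_movingFrame_sub_le (ψ := fun y => -ψ y) (c := β) (M := 0)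
      (hψ.of_le (by simp)).neg hψc.neg hs hst fun r _ => integral_nonpos fun x =>
        mul_nonpos_of_nonpos_of_nonneg (neg_nonpos.2 (hψ0 _))
          (sub_nonneg.2 (le_of_abs_le (hκ.abs_speed_le r x)))
    simpa only [neg_mul, ← mul_neg, neg_sub, zero_mul] using h

theorem cdf_sub_le_cdf (hκ : IsTransportSolution κ l β) (hs : 0 ≤ s) (hst : s ≤ t) (x : ℝ) :
    cdf (κ t) (x - β * (t - s)) ≤ cdf (κ s) x := by
  rcases hst.eq_or_lt with rfl | hst
  · simp
  have h := nonpos_of_forall_integral_mul_nonpos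
    (f := fun y => cdf (κ t) (y + -β * t) - cdf (κ s) (y + -β * s))
    (fun y => (continuousWithinAt_cdf_comp_add (κ t) _ y).sub
      (continuousWithinAt_cdf_comp_add (κ s) _ y))
    (locallyIntegrable_cdf_sub_cdf _ _ _ _) (fun ψ hψ hψc hψ0 => ?_) (x + β * s)
  · convert sub_nonpos.1 h using 2 <;> ring
  · simpa only [zero_mul] using hκ.integral_movingFrame_sub_le (c := -β) (M := 0)
      (hψ.of_le (by simp)) hψc hs hst fun r _ => integral_nonpos fun x =>
        mul_nonpos_of_nonneg_of_nonpos (hψ0 _)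
          (sub_nonpos.2 (neg_le_of_abs_le (hκ.abs_speed_le r x)))

theorem cdf_le_leftLim_cdf_of_add_lt (hκ : IsTransportSolution κ l β) (hs : 0 ≤ s)
    (hst : s ≤ t) {x : ℝ} (hx : a + β * (t - s) < x) :
    cdf (κ s) a ≤ Function.leftLim (cdf (κ t)) x :=
  (hκ.cdf_le_cdf_add hs hst a).trans ((monotone_cdf (κ t)).le_leftLim hx)

theorem cdf_le_leftLim_cdf_of_lt_sub (hκ : IsTransportSolution κ l β) (hs : 0 ≤ s)
    (hst : s ≤ t) {x : ℝ} (hx : x < b - β * (t - s)) :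
    cdf (κ t) x ≤ Function.leftLim (cdf (κ s)) b :=
  calc cdf (κ t) x = cdf (κ t) (x + β * (t - s) - β * (t - s)) := by rw [add_sub_cancel_right]
    _ ≤ cdf (κ s) (x + β * (t - s)) := hκ.cdf_sub_le_cdf hs hst _
    _ ≤ Function.leftLim (cdf (κ s)) b := (monotone_cdf (κ s)).le_leftLim (lt_sub_iff_add_lt.1 hx)

theorem leftLim_cdf_sub_le_leftLim_cdf (hκ : IsTransportSolution κ l β) (hs : 0 ≤ s)
    (hst : s ≤ t) (x : ℝ) :
    Function.leftLim (cdf (κ t)) (x - β * (t - s)) ≤ Function.leftLim (cdf (κ s)) x := by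
  refine le_of_tendsto ((monotone_cdf (κ t)).tendsto_leftLim _) ?_
  filter_upwards [self_mem_nhdsWithin] with z hz using hκ.cdf_le_leftLim_cdf_of_lt_sub hs hst hz

theorem measureReal_Ioo_le (hκ : IsTransportSolution κ l β) (hs : 0 ≤ s) (hst : s ≤ t) (a b : ℝ) :
    (κ t).real (Ioo (a + β * (t - s)) (b - β * (t - s))) ≤ (κ s).real (Ioo a b) := by
  refine ENNReal.toReal_mono (measure_ne_top _ _) ?_
  rw [← measure_cdf (κ t), ← measure_cdf (κ s), StieltjesFunction.measure_Ioo,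
    StieltjesFunction.measure_Ioo]
  exact ENNReal.ofReal_le_ofReal
    (sub_le_sub (hκ.leftLim_cdf_sub_le_leftLim_cdf hs hst b) (hκ.cdf_le_cdf_add hs hst a))

theorem intervalIntegral_movingFrame_le (hκ : IsTransportSolution κ l β) (hs : 0 ≤ s) (hst : s < t)
    (hab : a ≤ b) {N Δ : ℝ} (hN : 0 ≤ N)
    (h_speed : ∀ r ∈ Ioo s t, ∀ x ∈ Ioo (a + c * r) (b + c * r), |c - l r x| ≤ N)
    (h_mass : ∀ r ∈ Ioo s t, (κ r).real (Ioo (a + c * r) (b + c * r)) ≤ Δ) :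
    ∫ y in a..b, |cdf (κ t) (y + c * t) - cdf (κ s) (y + c * s)| ≤ N * Δ * (t - s) := by
  rw [intervalIntegral.integral_of_le hab, integral_Ioc_eq_integral_Ioo]
  refine setIntegral_abs_le_of_forall_contDiff isOpen_Ioo
    (((locallyIntegrable_cdf_sub_cdf _ _ _ _).integrableOn_isCompact isCompact_Icc).mono_set
      Ioo_subset_Icc_self) fun ψ hψ hψc hψ_supp hψ1 => ?_
  have hψ_zero {y : ℝ} (hy : y ∉ Ioo a b) : ψ y = 0 :=
    image_eq_zero_of_notMem_tsupport fun h => hy (hψ_supp h)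
  rw [setIntegral_eq_integral_of_forall_compl_eq_zero fun y hy => by simp [hψ_zero hy]]
  refine hκ.integral_movingFrame_sub_le (hψ.of_le (by simp)) hψc hs hst fun r hr => ?_
  let I : Set ℝ := Ioo (a + c * r) (b + c * r)
  calc ∫ x, ψ (x - c * r) * (c - l r x) ∂κ r
      = ∫ x in I, ψ (x - c * r) * (c - l r x) ∂κ r := by
        refine (setIntegral_eq_integral_of_forall_compl_eq_zero fun x hx => ?_).symm
        rw [hψ_zero fun h => hx ⟨lt_sub_iff_add_lt.1 h.1, sub_lt_iff_lt_add.1 h.2⟩, zero_mul]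
    _ ≤ N * (κ r).real I := by
        refine (Real.le_norm_self _).trans
          (norm_setIntegral_le_of_norm_le_const (measure_lt_top _ _) fun x hx => ?_)
        rw [norm_mul]
        exact (mul_le_of_le_one_left (abs_nonneg _) (hψ1 _)).trans (h_speed r hr x hx)
    _ ≤ N * Δ := mul_le_mul_of_nonneg_left (h_mass r hr) hN

theorem intervalIntegral_cdf_sub_translate_le (hκ : IsTransportSolution κ l β) {τ h N : ℝ}
    (hτ : 0 ≤ τ) (hh : 0 < h) (hab : a + β * h ≤ b - β * h) (hc : |c| ≤ β) (hN : 0 ≤ N)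
    (h_speed : ∀ r ∈ Ioo τ (τ + h), ∀ x ∈ Ioo (a + β * (r - τ)) (b - β * (r - τ)),
      |c - l r x| ≤ N) :
    ∫ x in (a + β * h)..(b - β * h), |cdf (κ (τ + h)) x - cdf (κ τ) (x - c * h)| ≤
      N * (κ τ).real (Ioo a b) * h := by
  let A := a + β * h - c * (τ + h)
  let B := b - β * h - c * (τ + h)
  have h_cone {r : ℝ} (hr : r ∈ Ioo τ (τ + h)) :
      Ioo (A + c * r) (B + c * r) ⊆ Ioo (a + β * (r - τ)) (b - β * (r - τ)) := by
    have hr' : 0 ≤ τ + h - r := sub_nonneg.2 hr.2.le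
    have h_le := mul_le_mul_of_nonneg_right (le_of_abs_le hc) hr'
    have h_ge := mul_le_mul_of_nonneg_right (neg_le_of_abs_le hc) hr'
    refine Ioo_subset_Ioo ?_ ?_ <;> simp only [A, B] <;> linarith
  have h_frame := hκ.intervalIntegral_movingFrame_le (a := A) (b := B) hτ (lt_add_of_pos_right τ hh)
    (sub_le_sub_right hab _) hN (fun r hr x hx => h_speed r hr x (h_cone hr hx))
    fun r hr => (measureReal_mono (h_cone hr)).trans (hκ.measureReal_Ioo_le hτ hr.1.le a b)
  rw [add_sub_cancel_left] at h_frame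
  refine le_of_eq_of_le ?_ h_frame
  rw [← intervalIntegral.integral_comp_sub_right _ (c * (τ + h))]
  refine intervalIntegral.integral_congr fun x _ => ?_
  ring_nf

end IsTransportSolution

section System

theorem IsCDF.mem_Icc {F : ℝ → ℝ} (hF : IsCDF F) (x : ℝ) : F x ∈ Icc (0 : ℝ) 1 :=
  ⟨hF.1.le_of_tendsto hF.2.2.1 x, hF.1.ge_of_tendsto hF.2.2.2 x⟩

theorem IsCDF.leftLim_nonneg {F : ℝ → ℝ} (hF : IsCDF F) (x : ℝ) : 0 ≤ Function.leftLim F x :=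
  (hF.mem_Icc (x - 1)).1.trans (hF.1.le_leftLim (sub_one_lt x))

variable {d : ℕ} {lam : Fin d → (Fin d → ℝ) → ℝ} {u : Fin d → ℝ → ℝ → ℝ} {u0 : Fin d → ℝ → ℝ}
  {γ : Fin d} {L β a b s t x τ ξ h : ℝ}

/-- Condition (LC): on the cube `[0,1]^d`, every component of the velocity field `lam` is
`L`-Lipschitz with respect to the `ℓ¹` distance. -/
structure IsCubeLipschitz (lam : Fin d → (Fin d → ℝ) → ℝ) (L : ℝ) : Prop where
  nonneg : 0 ≤ L
  abs_sub_le : ∀ (γ : Fin d) (w w' : Fin d → ℝ), w ∈ Icc (0 : Fin d → ℝ) 1 →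
    w' ∈ Icc (0 : Fin d → ℝ) 1 → |lam γ w - lam γ w'| ≤ L * ∑ γ' : Fin d, |w γ' - w' γ'|

/-- `β` bounds the absolute value of all the velocities `lam γ` on the cube `[0,1]^d`. -/
def IsSpeedBound (lam : Fin d → (Fin d → ℝ) → ℝ) (β : ℝ) : Prop :=
  ∀ γ : Fin d, ∀ w ∈ Icc (0 : Fin d → ℝ) 1, |lam γ w| ≤ β

/-- The state `(u¹, …, (1 - θ) u^γ(t,x⁻) + θ u^γ(t,x), …, u^d)` at which `lamBrace` evaluates
`lam γ` before averaging over `θ ∈ [0,1]`. -/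
def averagedState (u : Fin d → ℝ → ℝ → ℝ) (γ : Fin d) (t x θ : ℝ) : Fin d → ℝ :=
  Function.update (fun γ' => u γ' t x) γ ((1 - θ) * Function.leftLim (u γ t) x + θ * u γ t x)

theorem IsCubeLipschitz.continuousOn (hlam : IsCubeLipschitz lam L) (γ : Fin d) :
    ContinuousOn (lam γ) (Icc 0 1) := by
  refine (LipschitzOnWith.of_dist_le' (K := L * d) fun w hw w' hw' => ?_).continuousOn
  calc |lam γ w - lam γ w'| ≤ L * ∑ γ', |w γ' - w' γ'| := hlam.abs_sub_le γ w w' hw hw'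
    _ ≤ L * ∑ _γ' : Fin d, dist w w' := mul_le_mul_of_nonneg_left
        (Finset.sum_le_sum fun γ' _ => dist_le_pi_dist w w' γ') hlam.nonneg
    _ = L * d * dist w w' := by simp [mul_assoc]

theorem IsCubeLipschitz.exists_isSpeedBound (hlam : IsCubeLipschitz lam L) :
    ∃ β, 0 < β ∧ IsSpeedBound lam β := by
  obtain ⟨C, hC⟩ := isCompact_Icc.exists_bound_of_continuousOn
    (continuousOn_pi.2 fun γ => hlam.continuousOn γ)
  exact ⟨max C 1, lt_max_of_lt_right one_pos, fun γ w hw =>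
    (norm_le_pi_norm (fun γ => lam γ w) γ).trans ((hC w hw).trans (le_max_left C 1))⟩

theorem continuous_averagedState (u : Fin d → ℝ → ℝ → ℝ) (γ : Fin d) (t x : ℝ) :
    Continuous (averagedState u γ t x) :=
  continuous_const.update γ (by fun_prop)

theorem averagedState_mem_Icc {p q : Fin d → ℝ} {θ : ℝ} (hu : ∀ i, Monotone (u i t))
    (hp : ∀ i, p i ≤ Function.leftLim (u i t) x) (hq : ∀ i, u i t x ≤ q i)
    (hθ : θ ∈ Icc (0 : ℝ) 1) : averagedState u γ t x θ ∈ Icc p q := by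
  have h_jump (i : Fin d) : Function.leftLim (u i t) x ≤ u i t x := (hu i).leftLim_le le_rfl
  have h_state (i : Fin d) : u i t x ∈ Icc (p i) (q i) := ⟨(hp i).trans (h_jump i), hq i⟩
  have h_avg : (1 - θ) * Function.leftLim (u γ t) x + θ * u γ t x ∈ Icc (p γ) (q γ) :=
    convex_Icc (p γ) (q γ) ⟨hp γ, (h_jump γ).trans (hq γ)⟩ (h_state γ) (sub_nonneg.2 hθ.2) hθ.1
      (sub_add_cancel 1 θ)
  rw [← pi_univ_Icc, averagedState, update_mem_pi_iff_of_mem fun i _ => h_state i]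
  exact fun _ => h_avg

theorem averagedState_mem_cube {θ : ℝ} (hu : ∀ i, IsCDF (u i t)) (hθ : θ ∈ Icc (0 : ℝ) 1) :
    averagedState u γ t x θ ∈ Icc (0 : Fin d → ℝ) 1 :=
  averagedState_mem_Icc (fun i => (hu i).1) (fun i => (hu i).leftLim_nonneg x)
    (fun i => ((hu i).mem_Icc x).2) hθ

theorem abs_lamBrace_le (hβ : IsSpeedBound lam β) (hu : ∀ i, IsCDF (u i t)) :
    |lamBrace lam u γ t x| ≤ β :=
  abs_integral_zero_one_le fun _ hθ => hβ γ _ (averagedState_mem_cube hu hθ)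

theorem intervalIntegrable_comp_averagedState (hlam : ContinuousOn (lam γ) (Icc 0 1))
    (hu : ∀ i, IsCDF (u i t)) :
    IntervalIntegrable (fun θ => lam γ (averagedState u γ t x θ)) volume 0 1 := by
  refine (hlam.comp (continuous_averagedState u γ t x).continuousOn fun θ hθ =>
    averagedState_mem_cube hu ?_).intervalIntegrable
  rwa [← uIcc_of_le zero_le_one]

theorem IsCubeLipschitz.abs_lamBrace_sub_le (hlam : IsCubeLipschitz lam L) {p q : Fin d → ℝ}
    {t' x' : ℝ} (hu : ∀ i, IsCDF (u i t)) (hu' : ∀ i, IsCDF (u i t'))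
    (hp : ∀ i, p i ≤ Function.leftLim (u i t) x) (hq : ∀ i, u i t x ≤ q i)
    (hp' : ∀ i, p i ≤ Function.leftLim (u i t') x') (hq' : ∀ i, u i t' x' ≤ q i) :
    |lamBrace lam u γ t x - lamBrace lam u γ t' x'| ≤ L * ∑ i, (q i - p i) := by
  have h_pointwise (θ : ℝ) (hθ : θ ∈ Icc (0 : ℝ) 1) :
      |lam γ (averagedState u γ t x θ) - lam γ (averagedState u γ t' x' θ)| ≤
        L * ∑ i, (q i - p i) := by
    have h_box := averagedState_mem_Icc (γ := γ) (fun i => (hu i).1) hp hq hθ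
    have h_box' := averagedState_mem_Icc (γ := γ) (fun i => (hu' i).1) hp' hq' hθ
    refine (hlam.abs_sub_le γ _ _ (averagedState_mem_cube hu hθ)
      (averagedState_mem_cube hu' hθ)).trans (mul_le_mul_of_nonneg_left ?_ hlam.nonneg)
    exact Finset.sum_le_sum fun i _ =>
      abs_sub_le_of_le_of_le (h_box.1 i) (h_box.2 i) (h_box'.1 i) (h_box'.2 i)
  calc |lamBrace lam u γ t x - lamBrace lam u γ t' x'|
      = |∫ θ in (0 : ℝ)..1,
          (lam γ (averagedState u γ t x θ) - lam γ (averagedState u γ t' x' θ))| := by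
        rw [intervalIntegral.integral_sub
          (intervalIntegrable_comp_averagedState (hlam.continuousOn γ) hu)
          (intervalIntegrable_comp_averagedState (hlam.continuousOn γ) hu')]
        rfl
    _ ≤ L * ∑ i, (q i - p i) := abs_integral_zero_one_le h_pointwise

theorem measurable_averagedState (hu : ∀ i, Measurable (Function.uncurry (u i)))
    (hu_mono : ∀ i t, Monotone (u i t)) (γ : Fin d) :
    Measurable fun p : (ℝ × ℝ) × ℝ => averagedState u γ p.1.1 p.1.2 p.2 := by
  have h_leftLim := measurable_uncurry_leftLim (hu γ) (hu_mono γ)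
  refine measurable_pi_iff.2 fun i => ?_
  rcases eq_or_ne i γ with rfl | hi
  · simp only [averagedState, Function.update_self]
    exact ((measurable_snd.const_sub 1).mul (h_leftLim.comp measurable_fst)).add
      (measurable_snd.mul ((hu i).comp measurable_fst))
  · simp only [averagedState, Function.update_of_ne hi]
    exact (hu i).comp measurable_fst

theorem measurable_lamBrace (hlam : ContinuousOn (lam γ) (Icc 0 1))
    (hu : ∀ i, Measurable (Function.uncurry (u i))) (hcdf : ∀ i t, IsCDF (u i t)) :
    Measurable (Function.uncurry (lamBrace lam u γ)) := by
  obtain ⟨f, hf⟩ := ContinuousMap.exists_restrict_eq isClosed_Icc ⟨_, hlam.domRestrict⟩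
  have hf_eq {w : Fin d → ℝ} (hw : w ∈ Icc (0 : Fin d → ℝ) 1) : f w = lam γ w :=
    DFunLike.congr_fun hf ⟨w, hw⟩
  have h_brace : Function.uncurry (lamBrace lam u γ) =
      fun p : ℝ × ℝ => ∫ θ in Ioc (0 : ℝ) 1, f (averagedState u γ p.1 p.2 θ) := by
    ext ⟨t, x⟩
    simp only [Function.uncurry_apply_pair, lamBrace, intervalIntegral.integral_of_le zero_le_one]
    exact setIntegral_congr_fun measurableSet_Ioc fun θ hθ =>
      (hf_eq (averagedState_mem_cube (fun i => hcdf i t) (Ioc_subset_Icc_self hθ))).symm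
  rw [h_brace]
  exact (f.continuous.measurable.comp (measurable_averagedState hu (fun i t => (hcdf i t).1) γ)
    ).stronglyMeasurable.integral_prod_right'.measurable

theorem IsProbSol.exists_measure (hsol : IsProbSol lam u u0) (γ : Fin d) :
    ∃ μ : ℝ → Measure ℝ, (∀ r, IsProbabilityMeasure (μ r)) ∧
      (∀ r, 0 ≤ r → ∀ x, (μ r).real (Iic x) = u γ r x) ∧
      ∀ φ φt, IsTestFun φ φt →
        (∫ r in Ici (0 : ℝ), ∫ x, φt r x * u γ r x) + ∫ x, φ 0 x * u0 γ x =
          ∫ r in Ici (0 : ℝ), ∫ x, φ r x * lamBrace lam u γ r x ∂μ r := by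
  obtain ⟨-, -, -, μ, hμ_prob, hμ_cdf, h_weak⟩ := hsol
  refine ⟨μ γ, hμ_prob γ, hμ_cdf γ, fun φ φt hφ => ?_⟩
  have h_single := h_weak (fun i => if i = γ then φ else fun _ _ => 0)
    (fun i => if i = γ then φt else fun _ _ => 0) fun i => by
      split_ifs
      exacts [hφ, isTestFun_zero]
  rwa [Fintype.sum_eq_single γ fun i hi => by simp [hi],
    Fintype.sum_eq_single γ fun i hi => by simp [hi], if_pos rfl, if_pos rfl] at h_single

theorem ContL1loc.tendsto_integral_abs_sub_max (hL1 : ContL1loc u) (γ : Fin d) (a b t : ℝ) :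
    Tendsto (fun r => ∫ x in Icc a b, |u γ (max r 0) x - u γ (max t 0) x|) (𝓝 t) (𝓝 0) :=
  (hL1 γ a b (max t 0) (le_max_right t 0)).comp (tendsto_nhdsWithin_iff.2
    ⟨(continuous_id.max continuous_const).tendsto t,
      Eventually.of_forall fun r => le_max_right r 0⟩)

theorem IsProbSol.measurable_max (hsol : IsProbSol lam u u0) (γ : Fin d) :
    Measurable (Function.uncurry fun t => u γ (max t 0)) := by
  have h_clamp : Measurable fun p : ℝ × ℝ =>
      ((⟨max p.1 0, mem_Ici.2 (le_max_right p.1 0)⟩ : Ici (0 : ℝ)), p.2) :=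
    (Measurable.subtype_mk (by fun_prop)).prodMk measurable_snd
  exact (hsol.1 γ).comp h_clamp

theorem IsProbSol.exists_isTransportSolution (hsol : IsProbSol lam u u0) (hL1 : ContL1loc u)
    (hlam : ContinuousOn (lam γ) (Icc 0 1)) (hβ : IsSpeedBound lam β) :
    ∃ κ : Kernel ℝ ℝ, IsMarkovKernel κ ∧
      IsTransportSolution κ (fun t => lamBrace lam u γ (max t 0)) β ∧
      ∀ t, 0 ≤ t → ⇑(cdf (κ t)) = u γ t := by
  have hcdf (i : Fin d) (t : ℝ) : IsCDF (u i (max t 0)) := hsol.2.1 i _ (le_max_right t 0)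
  obtain ⟨μ, hμ, hμ_cdf, h_weak⟩ := hsol.exists_measure γ
  have hμ_max (t x : ℝ) : (μ (max t 0)).real (Iic x) = u γ (max t 0) x :=
    hμ_cdf _ (le_max_right t 0) x
  let κ : Kernel ℝ ℝ := ⟨fun t => μ (max t 0), measurable_of_measurable_measureReal_Iic fun x => by
    simpa only [hμ_max] using (hsol.measurable_max γ).of_uncurry_right⟩
  have hκ_cdf (t : ℝ) : ⇑(cdf (κ t)) = u γ (max t 0) := by
    ext x
    rw [cdf_eq_real]
    exact hμ_max t x
  refine ⟨κ, ⟨fun t => hμ _⟩, ⟨?_, fun t x => abs_lamBrace_le hβ fun i => hcdf i t, ?_, ?_⟩,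
    fun t ht => by rw [hκ_cdf, max_eq_left ht]⟩
  · exact measurable_lamBrace (u := fun i t => u i (max t 0)) hlam hsol.measurable_max hcdf
  · simpa only [hκ_cdf] using hL1.tendsto_integral_abs_sub_max γ
  · intro φ φt hφ hφ_zero
    have h := h_weak φ φt hφ
    simp only [hφ_zero, zero_mul, integral_zero, add_zero] at h
    convert! h using 1 <;> refine setIntegral_congr_fun measurableSet_Ici fun t ht => ?_
    · simp only [hκ_cdf, max_eq_left (mem_Ici.1 ht)]
    · simp only [κ, Kernel.coe_mk, max_eq_left (mem_Ici.1 ht)]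

theorem IsProbSol.le_leftLim_of_add_lt (hsol : IsProbSol lam u u0) (hL1 : ContL1loc u)
    (hlam : ContinuousOn (lam γ) (Icc 0 1)) (hβ : IsSpeedBound lam β) (hs : 0 ≤ s) (hst : s ≤ t)
    (hx : a + β * (t - s) < x) : u γ s a ≤ Function.leftLim (u γ t) x := by
  obtain ⟨κ, _, hκ, hκ_cdf⟩ := hsol.exists_isTransportSolution hL1 hlam hβ
  simpa only [hκ_cdf s hs, hκ_cdf t (hs.trans hst)] using
    hκ.cdf_le_leftLim_cdf_of_add_lt hs hst hx

theorem IsProbSol.le_leftLim_of_lt_sub (hsol : IsProbSol lam u u0) (hL1 : ContL1loc u)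
    (hlam : ContinuousOn (lam γ) (Icc 0 1)) (hβ : IsSpeedBound lam β) (hs : 0 ≤ s) (hst : s ≤ t)
    (hx : x < b - β * (t - s)) : u γ t x ≤ Function.leftLim (u γ s) b := by
  obtain ⟨κ, _, hκ, hκ_cdf⟩ := hsol.exists_isTransportSolution hL1 hlam hβ
  simpa only [hκ_cdf s hs, hκ_cdf t (hs.trans hst)] using
    hκ.cdf_le_leftLim_cdf_of_lt_sub hs hst hx

theorem IsProbSol.abs_lamBrace_sub_lamBrace_le (hsol : IsProbSol lam u u0) (hL1 : ContL1loc u)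
    (hlam : IsCubeLipschitz lam L) (hβ : IsSpeedBound lam β) (hs : 0 ≤ s) (hst : s ≤ t)
    (hξ : ξ ∈ Ioo a b) (hx : x ∈ Ioo (a + β * (t - s)) (b - β * (t - s))) :
    |lamBrace lam u γ s ξ - lamBrace lam u γ t x| ≤
      L * ∑ i, (Function.leftLim (u i s) b - u i s a) := by
  have hcdf := hsol.2.1
  exact hlam.abs_lamBrace_sub_le (fun i => hcdf i s hs) (fun i => hcdf i t (hs.trans hst))
    (fun i => (hcdf i s hs).1.le_leftLim hξ.1) (fun i => (hcdf i s hs).1.le_leftLim hξ.2)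
    (fun i => hsol.le_leftLim_of_add_lt hL1 (hlam.continuousOn i) hβ hs hst hx.1)
    (fun i => hsol.le_leftLim_of_lt_sub hL1 (hlam.continuousOn i) hβ hs hst hx.2)

theorem IsProbSol.intervalIntegral_abs_sub_translate_le (hsol : IsProbSol lam u u0)
    (hL1 : ContL1loc u) (hlam : IsCubeLipschitz lam L) (hβ : IsSpeedBound lam β) (hτ : 0 ≤ τ)
    (hξ : ξ ∈ Ioo a b) (hh : 0 < h) (hab : a + β * h ≤ b - β * h) (γ : Fin d) :
    ∫ x in (a + β * h)..(b - β * h), |u γ (τ + h) x - u γ τ (x - lamBrace lam u γ τ ξ * h)| ≤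
      L * (∑ i, (Function.leftLim (u i τ) b - u i τ a)) *
        (Function.leftLim (u γ τ) b - u γ τ a) * h := by
  have hcdf := hsol.2.1
  obtain ⟨κ, _, hκ, hκ_cdf⟩ := hsol.exists_isTransportSolution hL1 (hlam.continuousOn γ) hβ
  have h_est := hκ.intervalIntegral_cdf_sub_translate_le (c := lamBrace lam u γ τ ξ) hτ hh hab
    (abs_lamBrace_le hβ fun i => hcdf i τ hτ)
    (mul_nonneg hlam.nonneg (Finset.sum_nonneg fun i _ =>
      sub_nonneg.2 ((hcdf i τ hτ).1.le_leftLim (hξ.1.trans hξ.2))))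
    fun r hr x hx => by
      rw [max_eq_left (hτ.trans hr.1.le)]
      exact hsol.abs_lamBrace_sub_lamBrace_le hL1 hlam hβ hτ hr.1.le hξ hx
  rwa [measureReal_Ioo_eq_leftLim_cdf_sub (κ τ) (hξ.1.trans hξ.2), hκ_cdf τ hτ,
    hκ_cdf (τ + h) (add_nonneg hτ hh.le)] at h_est

theorem IsProbSol.intervalIntegral_sum_abs_sub_translate_le (hsol : IsProbSol lam u u0)
    (hL1 : ContL1loc u) (hlam : IsCubeLipschitz lam L) (hβ : IsSpeedBound lam β) (hτ : 0 ≤ τ)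
    (hξ : ξ ∈ Ioo a b) (hh : 0 < h) (hab : a + β * h ≤ b - β * h) :
    ∫ x in (a + β * h)..(b - β * h),
        ∑ γ, |u γ (τ + h) x - u γ τ (x - lamBrace lam u γ τ ξ * h)| ≤
      L * (∑ γ, (Function.leftLim (u γ τ) b - u γ τ a)) ^ 2 * h := by
  have hcdf := hsol.2.1
  have h_int (γ : Fin d) : IntervalIntegrable
      (fun x => |u γ (τ + h) x - u γ τ (x - lamBrace lam u γ τ ξ * h)|) volume
      (a + β * h) (b - β * h) :=
    ((hcdf γ (τ + h) (add_nonneg hτ hh.le)).1.intervalIntegrable.sub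
      ((hcdf γ τ hτ).1.comp fun _ _ hxy => sub_le_sub_right hxy _).intervalIntegrable).abs
  rw [intervalIntegral.integral_finsetSum fun γ _ => h_int γ]
  refine (Finset.sum_le_sum fun γ _ =>
    hsol.intervalIntegral_abs_sub_translate_le hL1 hlam hβ hτ hξ hh hab γ).trans_eq ?_
  rw [← Finset.sum_mul, ← Finset.mul_sum]
  ring

theorem IsProbSol.limsup_flat_le (hsol : IsProbSol lam u u0) (hL1 : ContL1loc u)
    (hlam : IsCubeLipschitz lam L) (hβ : IsSpeedBound lam β) (hτ : 0 ≤ τ) (hξ : ξ ∈ Ioo a b) :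
    limsup (fun h : ℝ => (((1 / h) * ∫ x in (a + β * h)..(b - β * h),
        ∑ γ, |u γ (τ + h) x - u γ τ (x - lamBrace lam u γ τ ξ * h)| : ℝ) : EReal)) (𝓝[>] 0) ≤
      ((L * (∑ γ, (Function.leftLim (u γ τ) b - u γ τ a)) ^ 2 : ℝ) : EReal) := by
  have h_cone : ∀ᶠ h in 𝓝[>] (0 : ℝ), a + β * h < b - β * h :=
    nhdsWithin_le_nhds (Tendsto.eventually_lt (f := fun h => a + β * h) (g := fun h => b - β * h)
      (Continuous.tendsto (by fun_prop) 0) (Continuous.tendsto (by fun_prop) 0)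
      (by simpa using hξ.1.trans hξ.2))
  refine limsup_one_div_mul_le ?_
  filter_upwards [h_cone, self_mem_nhdsWithin] with h hab hh
  exact hsol.intervalIntegral_sum_abs_sub_translate_le hL1 hlam hβ hτ hξ hh hab.le

end System

/-- **Flat estimate** (Bianchini–Bressan condition): for a Lipschitz field `λ` and a
probabilistic solution `u` continuous in `L¹_loc`, comparing `u(τ+h,·)` with the
linear transport of `u(τ,·)` at the frozen speed `λ^γ{u}(τ,ξ)`,
`limsup_{h↓0} (1/h) ∫_{a+βh}^{b−βh} Σ_γ |u^γ(τ+h,x) − u^γ(τ, x − λ^γ{u}(τ,ξ)h)| dx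
  ≤ C (Σ_γ (u^γ(τ,b⁻) − u^γ(τ,a)))²`;
one can take `C = L` and any `β` larger than all the `|λ^γ|`. -/
theorem flat_estimate {d : ℕ} (hd : 1 ≤ d)
    (lam : Fin d → (Fin d → ℝ) → ℝ)
    (L : ℝ) (hL : 0 ≤ L)
    (hLC : ∀ γ : Fin d, ∀ w w' : Fin d → ℝ, w ∈ Icc (0 : Fin d → ℝ) 1 →
      w' ∈ Icc (0 : Fin d → ℝ) 1 →
      |lam γ w - lam γ w'| ≤ L * ∑ γ' : Fin d, |w γ' - w' γ'|)
    (u : Fin d → ℝ → ℝ → ℝ) (u0 : Fin d → ℝ → ℝ)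
    (hsol : IsProbSol lam u u0) (hL1 : ContL1loc u) :
    (∃ C : ℝ, 0 < C ∧ ∃ β : ℝ, 0 < β ∧
      ∀ τ ξ a b : ℝ, 0 ≤ τ → a < ξ → ξ < b →
        Filter.limsup
          (fun h : ℝ =>
            (((1 / h) * ∫ x in (a + β * h)..(b - β * h),
                ∑ γ : Fin d,
                  |u γ (τ + h) x - u γ τ (x - lamBrace lam u γ τ ξ * h)| : ℝ) : EReal))
          (nhdsWithin (0:ℝ) (Ioi 0))
        ≤ ((C * (∑ γ : Fin d, (Function.leftLim (u γ τ) b - u γ τ a)) ^ 2 : ℝ) : EReal)) ∧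
    (∀ β : ℝ, (∀ γ : Fin d, ∀ w ∈ Icc (0 : Fin d → ℝ) 1, |lam γ w| < β) →
      ∀ τ ξ a b : ℝ, 0 ≤ τ → a < ξ → ξ < b →
        Filter.limsup
          (fun h : ℝ =>
            (((1 / h) * ∫ x in (a + β * h)..(b - β * h),
                ∑ γ : Fin d,
                  |u γ (τ + h) x - u γ τ (x - lamBrace lam u γ τ ξ * h)| : ℝ) : EReal))
          (nhdsWithin (0:ℝ) (Ioi 0))
        ≤ ((L * (∑ γ : Fin d, (Function.leftLim (u γ τ) b - u γ τ a)) ^ 2 : ℝ) : EReal)) := by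
  have hlam : IsCubeLipschitz lam L := ⟨hL, hLC⟩
  obtain ⟨β, hβ_pos, hβ⟩ := hlam.exists_isSpeedBound
  refine ⟨⟨L + 1, by positivity, β, hβ_pos, fun τ ξ a b hτ haξ hξb => ?_⟩,
    fun β' hβ' τ ξ a b hτ haξ hξb => ?_⟩
  · refine (hsol.limsup_flat_le hL1 hlam hβ hτ ⟨haξ, hξb⟩).trans (EReal.coe_le_coe_iff.2 ?_)
    exact mul_le_mul_of_nonneg_right (le_add_of_nonneg_right zero_le_one) (sq_nonneg _)
  · exact hsol.limsup_flat_le hL1 hlam (fun γ w hw => (hβ' γ w hw).le) hτ ⟨haξ, hξb⟩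
end
end

section
/- Let p ∈ [1,∞). Let (m_n)_{n≥1} and (m′_n)_{n≥1} be sequences of Borel probability measures on ℝ converging weakly to m and m′ respectively, and let F_n, G_n, F, G denote the CDFs of m_n, m′_n, m, m′. Then ∫₀¹ |F⁻¹(v) − G⁻¹(v)|^p dv ≤ liminf_{n→∞} ∫₀¹ |F_n⁻¹(v) − G_n⁻¹(v)|^p dv, where both sides are taken in [0,+∞]. -/
/-!
Since `F⁻¹(v) ≤ x ↔ v ≤ F(x)`, the portmanteau theorem for the half-lines makes `μ ↦ F_μ⁻¹(v)` lower
semicontinuous for weak convergence, for every `v ∈ (0, 1)`, and upper semicontinuous at `μ` as soon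
as `F_μ⁻¹` is right-continuous at `v`. The monotone function `F_μ⁻¹` has only countably many
discontinuities, so quantile functions converge almost everywhere, and Fatou's lemma gives the
result for every lower semicontinuous cost.
-/

open MeasureTheory Filter Set

noncomputable section

/-- The CDF of a Borel measure on ℝ. -/
def mcdf (m : Measure ℝ) (x : ℝ) : ℝ := (m (Iic x)).toReal

open ProbabilityTheory
open scoped ENNReal Topology

section PseudoInverse

variable {F : StieltjesFunction ℝ} {a b : ℝ}

lemma cdfInv_le_iff (ha : Tendsto F atBot (𝓝 a)) (hb : Tendsto F atTop (𝓝 b)) {v x : ℝ}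
    (hv : v ∈ Ioo a b) : cdfInv F v ≤ x ↔ v ≤ F x := by
  have hbdd : BddBelow {x | v ≤ F x} := by
    obtain ⟨y, hy⟩ := (ha.eventually_lt_const hv.1).exists
    exact ⟨y, fun z hz => (F.mono.reflect_lt (hy.trans_le hz)).le⟩
  have hne : {x | v ≤ F x}.Nonempty := by
    obtain ⟨y, hy⟩ := (hb.eventually_const_lt hv.2).exists
    exact ⟨y, hy.le⟩
  refine ⟨fun h => ?_, fun h => csInf_le hbdd h⟩
  rw [← F.iInf_Ioi_eq x]
  refine le_ciInf fun ⟨y, hy⟩ => ?_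
  obtain ⟨z, hz, hzy⟩ := exists_lt_of_csInf_lt hne (h.trans_lt hy)
  exact hz.trans (F.mono hzy.le)

lemma monotoneOn_cdfInv (ha : Tendsto F atBot (𝓝 a)) (hb : Tendsto F atTop (𝓝 b)) :
    MonotoneOn (cdfInv F) (Ioo a b) := fun _ hv _ hw hvw =>
  (cdfInv_le_iff ha hb hv).2 (hvw.trans ((cdfInv_le_iff ha hb hw).1 le_rfl))

end PseudoInverse

section QuantileFunction

variable (μ : Measure ℝ) [IsProbabilityMeasure μ]

lemma mcdf_eq_cdf : mcdf μ = cdf μ :=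
  funext fun x => (cdf_eq_real μ x).symm

lemma cdfInv_mcdf_le_iff {v x : ℝ} (hv : v ∈ Ioo (0 : ℝ) 1) :
    cdfInv (mcdf μ) v ≤ x ↔ v ≤ mcdf μ x := by
  rw [mcdf_eq_cdf]
  exact cdfInv_le_iff (tendsto_cdf_atBot μ) (tendsto_cdf_atTop μ) hv

lemma monotoneOn_cdfInv_mcdf : MonotoneOn (cdfInv (mcdf μ)) (Ioo 0 1) := by
  rw [mcdf_eq_cdf]
  exact monotoneOn_cdfInv (tendsto_cdf_atBot μ) (tendsto_cdf_atTop μ)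

lemma aemeasurable_cdfInv_mcdf : AEMeasurable (cdfInv (mcdf μ)) (volume.restrict (Ioo 0 1)) :=
  aemeasurable_restrict_of_monotoneOn measurableSet_Ioo (monotoneOn_cdfInv_mcdf μ)

end QuantileFunction

section WeakConvergence

variable {Ω : Type*} [MeasurableSpace Ω] [TopologicalSpace Ω] [OpensMeasurableSpace Ω]

lemma tendsto_probabilityMeasure_of_forall_continuous_bounded {ι : Type*} {l : Filter ι}
    {μs : ι → Measure Ω} {μ : Measure Ω} (hμs : ∀ i, IsProbabilityMeasure (μs i))
    (hμ : IsProbabilityMeasure μ)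
    (h : ∀ f : Ω → ℝ, Continuous f → (∃ M, ∀ x, |f x| ≤ M) →
      Tendsto (fun i => ∫ x, f x ∂μs i) l (𝓝 (∫ x, f x ∂μ))) :
    Tendsto (β := ProbabilityMeasure Ω) (fun i => ⟨μs i, hμs i⟩) l (𝓝 ⟨μ, hμ⟩) :=
  ProbabilityMeasure.tendsto_iff_forall_integral_tendsto.2 fun f =>
    h f f.continuous ⟨‖f‖, f.norm_coe_le_norm⟩

variable [HasOuterApproxClosed Ω]

lemma lowerSemicontinuous_measureReal_of_isOpen {G : Set Ω} (hG : IsOpen G) :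
    LowerSemicontinuous fun μ : ProbabilityMeasure Ω => (μ : Measure Ω).real G := by
  have hlsc : LowerSemicontinuous fun μ : ProbabilityMeasure Ω => (μ : Measure Ω) G :=
    lowerSemicontinuous_iff_le_liminf.2 fun _ =>
      ProbabilityMeasure.le_liminf_measure_open_of_tendsto tendsto_id hG
  intro μ r hr
  rcases lt_or_ge r 0 with hneg | hnonneg
  · exact .of_forall fun _ => hneg.trans_le measureReal_nonneg
  · filter_upwards [hlsc μ _ ((ENNReal.ofReal_lt_iff_lt_toReal hnonneg (measure_ne_top _ _)).2 hr)]
      with ν hν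
    exact (ENNReal.ofReal_lt_iff_lt_toReal hnonneg (measure_ne_top _ _)).1 hν

lemma upperSemicontinuous_measureReal_of_isClosed {C : Set Ω} (hC : IsClosed C) :
    UpperSemicontinuous fun μ : ProbabilityMeasure Ω => (μ : Measure Ω).real C := by
  intro μ r hr
  have hcompl (ν : ProbabilityMeasure Ω) :
      1 - r < (ν : Measure Ω).real Cᶜ ↔ (ν : Measure Ω).real C < r := by
    rw [probReal_compl_eq_one_sub hC.measurableSet, sub_lt_sub_iff_left]
  filter_upwards [lowerSemicontinuous_measureReal_of_isOpen hC.isOpen_compl μ _ ((hcompl μ).2 hr)]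
    with ν hν
  exact (hcompl ν).1 hν

end WeakConvergence

section QuantileConvergence

variable {v : ℝ}

lemma lowerSemicontinuous_cdfInv_mcdf (hv : v ∈ Ioo (0 : ℝ) 1) :
    LowerSemicontinuous fun μ : ProbabilityMeasure ℝ => cdfInv (mcdf μ) v := by
  intro μ y hy
  have hlt (ν : ProbabilityMeasure ℝ) : y < cdfInv (mcdf ν) v ↔ mcdf ν y < v :=
    lt_iff_lt_of_le_iff_le (cdfInv_mcdf_le_iff ν hv)
  filter_upwards [upperSemicontinuous_measureReal_of_isClosed isClosed_Iic μ v ((hlt μ).1 hy)]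
    with ν hν
  exact (hlt ν).2 hν

lemma upperSemicontinuousAt_cdfInv_mcdf (hv : v ∈ Ioo (0 : ℝ) 1) {μ : ProbabilityMeasure ℝ}
    (hμ : ContinuousWithinAt (cdfInv (mcdf μ)) (Ioo v 1) v) :
    UpperSemicontinuousAt (fun ν : ProbabilityMeasure ℝ => cdfInv (mcdf ν) v) μ := by
  intro y hy
  have := left_nhdsWithin_Ioo_neBot hv.2
  obtain ⟨w, hwy, hvw, hw⟩ :=
    ((hμ.eventually_lt_const hy).and eventually_mem_nhdsWithin).exists
  obtain ⟨z, hwz, hzy⟩ := exists_between hwy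
  have hvz : v < (μ : Measure ℝ).real (Iio z) := calc
    v < w := hvw
    _ ≤ mcdf μ (cdfInv (mcdf μ) w) := (cdfInv_mcdf_le_iff μ ⟨hv.1.trans hvw, hw⟩).1 le_rfl
    _ ≤ (μ : Measure ℝ).real (Iio z) := measureReal_mono (Iic_subset_Iio.2 hwz)
  filter_upwards [lowerSemicontinuous_measureReal_of_isOpen isOpen_Iio μ v hvz] with ν hν
  have hvν : v ≤ mcdf ν z := hν.le.trans (measureReal_mono Iio_subset_Iic_self)
  exact ((cdfInv_mcdf_le_iff ν hv).2 hvν).trans_lt hzy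

lemma ae_continuousAt_cdfInv_mcdf (μ : ProbabilityMeasure ℝ) :
    ∀ᵐ v ∂volume.restrict (Ioo (0 : ℝ) 1),
      ContinuousAt (fun ν : ProbabilityMeasure ℝ => cdfInv (mcdf ν) v) μ := by
  have hdisc := (monotoneOn_cdfInv_mcdf μ).countable_not_continuousWithinAt.ae_notMem volume
  filter_upwards [ae_restrict_of_ae hdisc, ae_restrict_mem measurableSet_Ioo] with v hvdisc hv
  have hcont : ContinuousWithinAt (cdfInv (mcdf μ)) (Ioo 0 1) v :=
    not_not.1 fun h => hvdisc ⟨hv, h⟩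
  exact continuousAt_iff_lower_upperSemicontinuousAt.2
    ⟨lowerSemicontinuous_cdfInv_mcdf hv μ,
      upperSemicontinuousAt_cdfInv_mcdf hv (hcont.mono (Ioo_subset_Ioo_left hv.1.le))⟩

end QuantileConvergence

lemma continuous_ofReal_abs_sub_rpow {p : ℝ} (hp : 0 ≤ p) :
    Continuous fun z : ℝ × ℝ => ENNReal.ofReal (|z.1 - z.2| ^ p) :=
  ENNReal.continuous_ofReal.comp
    ((continuous_fst.sub continuous_snd).abs.rpow_const fun _ => Or.inr hp)

theorem wasserstein_p_lsc_general {c : ℝ × ℝ → ℝ≥0∞} (hc : LowerSemicontinuous c) :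
    LowerSemicontinuous fun P : ProbabilityMeasure ℝ × ProbabilityMeasure ℝ =>
      ∫⁻ v in Ioo (0 : ℝ) 1, c (cdfInv (mcdf P.1) v, cdfInv (mcdf P.2) v) := by
  refine lowerSemicontinuous_iff_le_liminf.2 fun P =>
    (lintegral_mono_ae ?_).trans (lintegral_liminf_le' fun Q => ?_)
  · filter_upwards [ae_continuousAt_cdfInv_mcdf P.1, ae_continuousAt_cdfInv_mcdf P.2] with v h₁ h₂
    have hquantile : ContinuousAt (fun Q : ProbabilityMeasure ℝ × ProbabilityMeasure ℝ =>
        (cdfInv (mcdf Q.1) v, cdfInv (mcdf Q.2) v)) P :=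
      (h₁.comp continuousAt_fst).prodMk (h₂.comp continuousAt_snd)
    exact (LowerSemicontinuousAt.comp (hc _) hquantile).le_liminf
  · exact hc.measurable.comp_aemeasurable
      ((aemeasurable_cdfInv_mcdf Q.1).prodMk (aemeasurable_cdfInv_mcdf Q.2))

/-- **Lower semicontinuity of the Wasserstein distance of order `p`** along weakly
convergent sequences of probability measures on ℝ, expressed through quantile
functions: `∫₀¹ |F⁻¹ − G⁻¹|^p ≤ liminf ∫₀¹ |Fₙ⁻¹ − Gₙ⁻¹|^p` in `[0,∞]`. -/
theorem wasserstein_p_lsc (p : ℝ) (hp : 1 ≤ p)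
    (mn m'n : ℕ → Measure ℝ) (m m' : Measure ℝ)
    (hmn : ∀ n, IsProbabilityMeasure (mn n))
    (hm'n : ∀ n, IsProbabilityMeasure (m'n n))
    (hm : IsProbabilityMeasure m) (hm' : IsProbabilityMeasure m')
    (hweak : ∀ f : ℝ → ℝ, Continuous f → (∃ M, ∀ x, |f x| ≤ M) →
      Tendsto (fun n => ∫ x, f x ∂(mn n)) atTop (nhds (∫ x, f x ∂m)))
    (hweak' : ∀ f : ℝ → ℝ, Continuous f → (∃ M, ∀ x, |f x| ≤ M) →
      Tendsto (fun n => ∫ x, f x ∂(m'n n)) atTop (nhds (∫ x, f x ∂m'))) :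
    ∫⁻ v in Ioo (0:ℝ) 1,
        ENNReal.ofReal (|cdfInv (mcdf m) v - cdfInv (mcdf m') v| ^ p)
      ≤ Filter.liminf (fun n =>
          ∫⁻ v in Ioo (0:ℝ) 1,
            ENNReal.ofReal (|cdfInv (mcdf (mn n)) v - cdfInv (mcdf (m'n n)) v| ^ p))
          atTop := by
  have hlim := (tendsto_probabilityMeasure_of_forall_continuous_bounded hmn hm hweak).prodMk_nhds
    (tendsto_probabilityMeasure_of_forall_continuous_bounded hm'n hm' hweak')
  have hcost := (continuous_ofReal_abs_sub_rpow (zero_le_one.trans hp)).lowerSemicontinuous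
  exact ((wasserstein_p_lsc_general hcost).le_liminf (⟨m, hm⟩, ⟨m', hm'⟩)).trans
    hlim.liminf_le_liminf_comp
end
end

section
/- Let m be a Borel probability measure on ℝ with CDF F. For each n ≥ 1 and k ∈ {1,…,n}, set x_k(n) := (n+1) ∫_{(2k−1)/(2(n+1))}^{(2k+1)/(2(n+1))} F⁻¹(w) dw. Then the empirical measures m_n := (1/n) Σ_{k=1}^n δ_{x_k(n)} converge weakly to m as n → ∞, i.e. (1/n) Σ_{k=1}^n f(x_k(n)) → ∫_ℝ f dm for every bounded continuous f : ℝ → ℝ. -/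
open MeasureTheory Filter Set

noncomputable section

/-!
The pseudo-inverse `F⁻¹` pushes Lebesgue measure on `(0, 1)` forward to `m`, so the limit is
`∫₀¹ f (F⁻¹ v) dv`. The empirical mean is also an integral over `(0, 1)`, namely that of the step
function `v ↦ f (x_k(n))` with `k = ⌈n v⌉`. For this `k`, the number `x_k(n)` is the average of
`F⁻¹` over a window whose endpoints both tend to `v`. Being monotone, `F⁻¹` is continuous at almost
every `v`, and there `x_k(n) → F⁻¹ v`; dominated convergence concludes.
-/

open ProbabilityTheory Topology

section Quantile

lemma cdfInv_le_iff_s14 (F : StieltjesFunction ℝ) {v y : ℝ} (hlt : ∃ z, F z < v) (hle : ∃ z, v ≤ F z) :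
    cdfInv F v ≤ y ↔ v ≤ F y := by
  constructor
  · intro h
    have hF : Tendsto F (𝓝[>] y) (𝓝 (F y)) :=
      (F.right_continuous y).mono_left (nhdsWithin_mono y Ioi_subset_Ici_self)
    refine ge_of_tendsto hF ?_
    filter_upwards [self_mem_nhdsWithin] with z hz
    obtain ⟨w, hw, hwz⟩ := exists_lt_of_csInf_lt hle (h.trans_lt hz)
    exact le_trans hw (F.mono hwz.le)
  · obtain ⟨z, hz⟩ := hlt
    exact fun h ↦ csInf_le ⟨z, fun w hw ↦ (F.mono.reflect_lt (hz.trans_le hw)).le⟩ h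

variable (m : Measure ℝ)

lemma cdfInv_cdf_le_iff {v y : ℝ} (hv : v ∈ Ioo 0 1) : cdfInv (cdf m) v ≤ y ↔ v ≤ cdf m y :=
  cdfInv_le_iff_s14 (cdf m) ((tendsto_cdf_atBot m).eventually_lt_const hv.1).exists
    ((tendsto_cdf_atTop m).eventually_const_le hv.2).exists

lemma monotoneOn_cdfInv_cdf : MonotoneOn (cdfInv (cdf m)) (Ioo 0 1) := fun _ hu _ hv huv ↦
  (cdfInv_cdf_le_iff m hu).2 (huv.trans ((cdfInv_cdf_le_iff m hv).1 le_rfl))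

lemma aemeasurable_cdfInv_cdf : AEMeasurable (cdfInv (cdf m)) (volume.restrict (Ioo 0 1)) :=
  aemeasurable_restrict_of_monotoneOn measurableSet_Ioo (monotoneOn_cdfInv_cdf m)

lemma map_cdfInv_cdf [IsProbabilityMeasure m] :
    (volume.restrict (Ioo 0 1)).map (cdfInv (cdf m)) = m := by
  refine Measure.ext_of_Iic _ _ fun y ↦ ?_
  have hpreimage : cdfInv (cdf m) ⁻¹' Iic y =ᵐ[volume.restrict (Ioo 0 1)] Iic (cdf m y) := by
    filter_upwards [self_mem_ae_restrict measurableSet_Ioo] with v hv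
    exact propext (cdfInv_cdf_le_iff m hv)
  calc (volume.restrict (Ioo 0 1)).map (cdfInv (cdf m)) (Iic y)
    _ = volume.restrict (Ioo 0 1) (Iic (cdf m y)) := by
      rw [Measure.map_apply_of_aemeasurable (aemeasurable_cdfInv_cdf m) measurableSet_Iic,
        measure_congr hpreimage]
    _ = volume (Ioc 0 (cdf m y)) := by
      rw [restrict_Ioo_eq_restrict_Ioc, Measure.restrict_apply measurableSet_Iic, inter_comm,
        Ioc_inter_Iic, min_eq_right (cdf_le_one m y)]
    _ = m (Iic y) := by rw [Real.volume_Ioc, sub_zero, ofReal_cdf]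

end Quantile

lemma ae_continuousAt_of_monotoneOn {α β : Type*} [LinearOrder α] [TopologicalSpace α]
    [OrderTopology α] [MeasurableSpace α] [OpensMeasurableSpace α] [LinearOrder β]
    [TopologicalSpace β] [OrderTopology β] [SecondCountableTopology β] {μ : Measure α}
    [NullSingletonClass μ] {g : α → β} {s : Set α} (hg : MonotoneOn g s) (hs : IsOpen s) :
    ∀ᵐ v ∂μ.restrict s, ContinuousAt g v := by
  filter_upwards [hg.countable_not_continuousWithinAt.ae_notMem (μ.restrict s),
    self_mem_ae_restrict hs.measurableSet] with v hv hvs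
  by_contra hcont
  exact hv ⟨hvs, fun h ↦ hcont (h.continuousAt (hs.mem_nhds hvs))⟩

lemma aestronglyMeasurable_of_ae_continuousAt {α β : Type*} [TopologicalSpace α]
    [MeasurableSpace α] [OpensMeasurableSpace α] [TopologicalSpace β]
    [TopologicalSpace.PseudoMetrizableSpace β] [SecondCountableTopologyEither α β]
    {μ : Measure α} {f : α → β} (hf : ∀ᵐ y ∂μ, ContinuousAt f y) : AEStronglyMeasurable f μ := by
  let := TopologicalSpace.pseudoMetrizableSpacePseudoMetric β
  have hmeas : MeasurableSet {y | ContinuousAt f y} :=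
    (IsGδ.setOfPred_continuousAt f).measurableSet
  rw [← Measure.restrict_eq_self_of_ae_mem hf]
  exact ContinuousOn.aestronglyMeasurable (fun y hy ↦ ContinuousAt.continuousWithinAt hy) hmeas

lemma tendsto_two_mul_natCeil_mul_add_div {v : ℝ} (hv : 0 ≤ v) (c : ℝ) :
    Tendsto (fun n : ℕ ↦ (2 * (⌈v * n⌉₊ : ℝ) + c) / (2 * ((n : ℝ) + 1))) atTop (𝓝 v) := by
  have hceil : Tendsto (fun n : ℕ ↦ (⌈v * n⌉₊ : ℝ) / n) atTop (𝓝 v) :=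
    (tendsto_nat_ceil_mul_div_atTop hv).comp tendsto_natCast_atTop_atTop
  have hratio : Tendsto (fun n : ℕ ↦ (n : ℝ) / (n + 1)) atTop (𝓝 1) :=
    tendsto_natCast_div_add_atTop 1
  have hinv : Tendsto (fun n : ℕ ↦ 1 / ((n : ℝ) + 1)) atTop (𝓝 0) :=
    tendsto_one_div_add_atTop_nhds_zero_nat
  have hlim := (hceil.mul hratio).add (hinv.const_mul (c / 2))
  rw [mul_one, mul_zero, add_zero] at hlim
  refine hlim.congr' ?_
  filter_upwards [eventually_ne_atTop 0] with n hn
  field_simp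

section Averages

variable {E : Type*} [NormedAddCommGroup E] [NormedSpace ℝ E] [CompleteSpace E]

lemma tendsto_interval_average_of_continuousAt {ι : Type*} {l : Filter ι} {a b : ι → ℝ} {G : ℝ → E}
    {v : ℝ} (hG : ContinuousAt G v) (hmeas : StronglyMeasurableAtFilter G (𝓝 v))
    (ha : Tendsto a l (𝓝 v)) (hb : Tendsto b l (𝓝 v)) (hab : ∀ᶠ i in l, a i ≠ b i) :
    Tendsto (fun i ↦ ⨍ w in a i..b i, G w) l (𝓝 (G v)) := by
  have hFTC := intervalIntegral.integral_sub_linear_isLittleO_of_tendsto_ae hmeas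
    (hG.tendsto.mono_left inf_le_left) ha hb
  rw [← tendsto_sub_nhds_zero_iff]
  refine hFTC.tendsto_inv_smul_nhds_zero.congr' ?_
  filter_upwards [hab] with i hi
  rw [Pi.sub_apply, interval_average_eq, smul_sub, inv_smul_smul₀ (sub_ne_zero.2 hi.symm)]

lemma integral_comp_natCeil (h : ℕ → E) (n : ℕ) :
    ∫ u in (0 : ℝ)..n, h ⌈u⌉₊ = ∑ k ∈ Finset.Icc 1 n, h k := by
  have hceil (j : ℕ) : EqOn (fun _ ↦ h (j + 1)) (fun u : ℝ ↦ h ⌈u⌉₊) (uIoc j (j + 1 : ℕ)) := by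
    intro u hu
    rw [uIoc_of_le (by simp)] at hu
    have : ⌈u⌉₊ = j + 1 := (Nat.ceil_eq_iff j.succ_ne_zero).2 (by simpa using hu)
    simp only [this]
  calc ∫ u in (0 : ℝ)..n, h ⌈u⌉₊
    _ = ∑ j ∈ Finset.range n, ∫ u in (j : ℝ)..(j + 1 : ℕ), h ⌈u⌉₊ := by
      rw [intervalIntegral.sum_integral_adjacent_intervals fun j _ ↦
        intervalIntegrable_const.congr (hceil j), Nat.cast_zero]
    _ = ∑ j ∈ Finset.range n, h (j + 1) := Finset.sum_congr rfl fun j _ ↦ by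
      rw [← intervalIntegral.integral_congr_ae (.of_forall (hceil j))]
      simp
    _ = ∑ k ∈ Finset.Icc 1 n, h k := by
      rw [Finset.range_eq_Ico, Finset.sum_Ico_add' h 0 n 1]
      rfl

lemma integral_comp_natCeil_mul (h : ℕ → E) {n : ℕ} (hn : n ≠ 0) :
    ∫ v in (0 : ℝ)..1, h ⌈v * n⌉₊ = (1 / (n : ℝ)) • ∑ k ∈ Finset.Icc 1 n, h k := by
  rw [intervalIntegral.integral_comp_mul_right (fun u ↦ h ⌈u⌉₊) (Nat.cast_ne_zero.2 hn), zero_mul,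
    one_mul, integral_comp_natCeil, one_div]

lemma tendsto_average_of_tendsto_natCeil {h : ℕ → ℕ → E} {φ : ℝ → E} {M : ℝ}
    (hM : ∀ n k, ‖h n k‖ ≤ M)
    (hφ : ∀ᵐ v : ℝ ∂volume.restrict (Ioo 0 1),
      Tendsto (fun n : ℕ ↦ h n ⌈v * n⌉₊) atTop (𝓝 (φ v))) :
    Tendsto (fun n : ℕ ↦ (1 / (n : ℝ)) • ∑ k ∈ Finset.Icc 1 n, h n k) atTop
      (𝓝 (∫ v in Ioo 0 1, φ v)) := by
  have hmeas (n : ℕ) :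
      AEStronglyMeasurable (fun v : ℝ ↦ h n ⌈v * n⌉₊) (volume.restrict (Ioo 0 1)) :=
    (StronglyMeasurable.of_discrete.comp_measurable
      (measurable_id.mul_const _).nat_ceil).aestronglyMeasurable
  refine (tendsto_integral_of_dominated_convergence (fun _ ↦ M) hmeas (integrable_const M)
    (fun n ↦ .of_forall fun v ↦ hM n _) hφ).congr' ?_
  filter_upwards [eventually_ne_atTop 0] with n hn
  rw [← integral_comp_natCeil_mul (h n) hn, intervalIntegral.integral_of_le zero_le_one,
    integral_Ioc_eq_integral_Ioo]

lemma tendsto_smul_integral_natCeil_window {G : ℝ → E} {v : ℝ} (hv : 0 ≤ v) (hG : ContinuousAt G v)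
    (hmeas : StronglyMeasurableAtFilter G (𝓝 v)) :
    Tendsto (fun n : ℕ ↦ ((n : ℝ) + 1) •
      ∫ w in ((2 * (⌈v * n⌉₊ : ℝ) - 1) / (2 * ((n : ℝ) + 1)))..
        ((2 * (⌈v * n⌉₊ : ℝ) + 1) / (2 * ((n : ℝ) + 1))), G w) atTop (𝓝 (G v)) := by
  have hlen (n : ℕ) (k : ℝ) :
      (2 * k + 1) / (2 * ((n : ℝ) + 1)) - (2 * k - 1) / (2 * ((n : ℝ) + 1)) = ((n : ℝ) + 1)⁻¹ := by
    field_simp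
    ring
  have hne (n : ℕ) (k : ℝ) :
      (2 * k - 1) / (2 * ((n : ℝ) + 1)) ≠ (2 * k + 1) / (2 * ((n : ℝ) + 1)) :=
    (sub_pos.1 (hlen n k ▸ by positivity)).ne
  refine (tendsto_interval_average_of_continuousAt hG hmeas
    (tendsto_two_mul_natCeil_mul_add_div hv (-1)) (tendsto_two_mul_natCeil_mul_add_div hv 1)
    (.of_forall fun n ↦ hne n _)).congr fun n ↦ ?_
  rw [interval_average_eq, ← sub_eq_add_neg, hlen, inv_inv]

end Averages

theorem discretisation_weak_convergence_general
    {E : Type*} [NormedAddCommGroup E] [NormedSpace ℝ E] [CompleteSpace E]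
    (m : Measure ℝ) [IsProbabilityMeasure m]
    (F : ℝ → ℝ) (hF : ∀ x : ℝ, F x = (m (Iic x)).toReal)
    (x : ℕ → ℕ → ℝ)
    (hx : ∀ n k : ℕ, 1 ≤ k → k ≤ n →
      x n k = ((n : ℝ) + 1) *
        ∫ w in ((2 * (k : ℝ) - 1) / (2 * ((n : ℝ) + 1)))..
            ((2 * (k : ℝ) + 1) / (2 * ((n : ℝ) + 1))), cdfInv F w)
    (f : ℝ → E) (hf : ∀ᵐ y ∂m, ContinuousAt f y) (hbdd : ∃ M, ∀ y : ℝ, ‖f y‖ ≤ M) :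
    Tendsto (fun n : ℕ ↦ (1 / (n : ℝ)) • ∑ k ∈ Finset.Icc 1 n, f (x n k)) atTop
      (𝓝 (∫ y, f y ∂m)) := by
  obtain ⟨M, hM⟩ := hbdd
  obtain rfl : F = cdf m := funext fun y ↦ (hF y).trans (cdf_eq_real m y).symm
  have hmeas := aemeasurable_cdfInv_cdf m
  rw [← map_cdfInv_cdf m] at hf
  have hintegral : ∫ y, f y ∂m = ∫ v in Ioo 0 1, f (cdfInv (cdf m) v) := by
    rw [← integral_map hmeas (aestronglyMeasurable_of_ae_continuousAt hf), map_cdfInv_cdf]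
  rw [hintegral]
  refine tendsto_average_of_tendsto_natCeil (fun n k ↦ hM _) ?_
  filter_upwards [ae_of_ae_map hmeas hf, self_mem_ae_restrict measurableSet_Ioo,
    ae_continuousAt_of_monotoneOn (monotoneOn_cdfInv_cdf m) isOpen_Ioo] with v hfv hv hcont
  have hmeas_v : StronglyMeasurableAtFilter (cdfInv (cdf m)) (𝓝 v) :=
    ⟨Ioo 0 1, Ioo_mem_nhds hv.1 hv.2, hmeas.aestronglyMeasurable⟩
  refine (hfv.tendsto.comp (tendsto_smul_integral_natCeil_window hv.1.le hcont hmeas_v)).congr' ?_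
  filter_upwards [eventually_gt_atTop 0] with n hn
  have hn' : (0 : ℝ) < n := Nat.cast_pos.2 hn
  rw [Function.comp_apply, smul_eq_mul, hx n ⌈v * n⌉₊ (Nat.ceil_pos.2 (mul_pos hv.1 hn'))
    (Nat.ceil_le.2 (mul_le_of_le_one_left hn'.le hv.2.le))]

/-- **Weak convergence of the discretisation**: if
`x_k(n) = (n+1) ∫_{(2k−1)/(2(n+1))}^{(2k+1)/(2(n+1))} F⁻¹(w) dw`, then the empirical
measures `(1/n) Σ_{k=1}^n δ_{x_k(n)}` converge weakly to `m`. -/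
theorem discretisation_weak_convergence
    (m : Measure ℝ) [IsProbabilityMeasure m]
    (F : ℝ → ℝ) (hF : ∀ x : ℝ, F x = (m (Iic x)).toReal)
    (x : ℕ → ℕ → ℝ)
    (hx : ∀ n k : ℕ, 1 ≤ k → k ≤ n →
      x n k = ((n : ℝ) + 1) *
        ∫ w in ((2 * (k : ℝ) - 1) / (2 * ((n : ℝ) + 1)))..
            ((2 * (k : ℝ) + 1) / (2 * ((n : ℝ) + 1))), cdfInv F w) :
    ∀ f : ℝ → ℝ, Continuous f → (∃ M, ∀ y : ℝ, |f y| ≤ M) →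
      Tendsto (fun n : ℕ => (1 / (n : ℝ)) * ∑ k ∈ Finset.Icc 1 n, f (x n k)) atTop
        (nhds (∫ y, f y ∂m)) := by
  intro f hf hbdd
  exact discretisation_weak_convergence_general m F hF x hx f (.of_forall fun _ ↦ hf.continuousAt)
    hbdd
end
end

section
/- Let N ≥ 1, let C₁, C_∞ ≥ 0, and let Φ : ℝ^N → ℝ^N satisfy ‖Φ(z) − Φ(z′)‖_{ℓ¹} ≤ C₁ ‖z − z′‖_{ℓ¹} and ‖Φ(z) − Φ(z′)‖_{ℓ^∞} ≤ C_∞ ‖z − z′‖_{ℓ^∞} for all z, z′ ∈ ℝ^N. Then for every p ∈ (1,∞) and all z, z′ ∈ ℝ^N, ‖Φ(z) − Φ(z′)‖_{ℓ^p} ≤ C₁^{1/p} · C_∞^{1−1/p} · ‖z − z′‖_{ℓ^p}. -/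
/-!
Write `(a - t)⁺` for the excess of `a` over the level `t`. Truncating the difference `z - z'`
radially at level `t` inserts a point `y` with `‖y - z'‖_∞ ≤ t` whose `ℓ¹` distance to `z` is the
total excess `∑ i, (‖z i - z' i‖ - t)⁺`. The `ℓ^∞` bound controls `Φ y - Φ z'` and the `ℓ¹` bound
controls `Φ z - Φ y`, so the total excess of `Φ z - Φ z'` over `C_∞ t` is at most `C₁` times that of
`z - z'` over `t`. Since `a ^ p` is a positive mixture of the functions `(a - t)⁺`, with weight
proportional to `t ^ (p - 2)`, integrating over `t` gives the `ℓ^p` bound. This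
truncation argument takes the place of Rademacher's theorem and Riesz–Thorin interpolation.
-/

open MeasureTheory

section LayerCake

lemma intervalIntegrable_rpow_mul_sum_posPart_sub {ι : Type*} {s : ℝ} (hs : -1 < s)
    (u : Finset ι) (a : ι → ℝ) (b c : ℝ) :
    IntervalIntegrable (fun t : ℝ => t ^ s * ∑ i ∈ u, (a i - t)⁺) volume b c :=
  (intervalIntegral.intervalIntegrable_rpow' hs).mul_continuousOn <| Continuous.continuousOn <|
    continuous_finsetSum u fun _ _ => continuous_posPart.comp (continuous_const.sub continuous_id)

lemma intervalIntegrable_rpow_mul_posPart_sub {s : ℝ} (hs : -1 < s) (a b c : ℝ) :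
    IntervalIntegrable (fun t : ℝ => t ^ s * (a - t)⁺) volume b c := by
  simpa using intervalIntegrable_rpow_mul_sum_posPart_sub hs {()} (fun _ => a) b c

lemma integral_rpow_mul_sub {s a : ℝ} (hs : -1 < s) (ha : 0 ≤ a) :
    ∫ t in 0..a, t ^ s * (a - t) = a ^ (s + 2) / ((s + 1) * (s + 2)) := by
  have hs1 : s + 1 ≠ 0 := by linarith
  have hs2 : s + 2 ≠ 0 := by linarith
  have integrand_eq : ∀ t ∈ Set.uIcc 0 a, t ^ s * (a - t) = a * t ^ s - t ^ (s + 1) := by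
    intro t ht
    rw [Set.uIcc_of_le ha] at ht
    rw [Real.rpow_add_one' ht.1 hs1]
    ring
  rw [intervalIntegral.integral_congr integrand_eq, intervalIntegral.integral_sub
      ((intervalIntegral.intervalIntegrable_rpow' hs).const_mul a)
      (intervalIntegral.intervalIntegrable_rpow' (by linarith)),
    intervalIntegral.integral_const_mul, integral_rpow (Or.inl hs),
    integral_rpow (Or.inl (by linarith)), add_assoc s 1 1, one_add_one_eq_two,
    Real.zero_rpow hs1, Real.zero_rpow hs2]
  have rpow_eq : a ^ (s + 2) = a ^ (s + 1) * a := by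
    rw [← Real.rpow_add_one' ha (by linarith)]
    ring_nf
  rw [rpow_eq]
  field

lemma integral_rpow_mul_posPart_sub {s a M : ℝ} (hs : -1 < s) (ha : 0 ≤ a) (haM : a ≤ M) :
    ∫ t in 0..M, t ^ s * (a - t)⁺ = a ^ (s + 2) / ((s + 1) * (s + 2)) := by
  have below : ∫ t in 0..a, t ^ s * (a - t)⁺ = ∫ t in 0..a, t ^ s * (a - t) := by
    refine intervalIntegral.integral_congr fun t ht => ?_
    rw [Set.uIcc_of_le ha] at ht
    simp only [posPart_of_nonneg (sub_nonneg.2 ht.2)]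
  have above : ∫ t in a..M, t ^ s * (a - t)⁺ = ∫ _ in a..M, (0 : ℝ) := by
    refine intervalIntegral.integral_congr fun t ht => ?_
    rw [Set.uIcc_of_le haM] at ht
    simp only [posPart_of_nonpos (sub_nonpos.2 ht.1), mul_zero]
  rw [← intervalIntegral.integral_add_adjacent_intervals
      (intervalIntegrable_rpow_mul_posPart_sub hs a 0 a)
      (intervalIntegrable_rpow_mul_posPart_sub hs a a M),
    below, above, integral_rpow_mul_sub hs ha, intervalIntegral.integral_zero, add_zero]

end LayerCake

section Majorization

variable {ι κ : Type*} {u : Finset ι} {v : Finset κ} {a : ι → ℝ} {b : κ → ℝ} {p K L : ℝ}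

lemma integral_rpow_mul_sum_posPart_sub {M : ℝ} (hp : 1 < p) (ha : ∀ i ∈ u, 0 ≤ a i)
    (haM : ∀ i ∈ u, a i ≤ M) :
    ∫ t in 0..M, t ^ (p - 2) * ∑ i ∈ u, (a i - t)⁺ = (∑ i ∈ u, a i ^ p) / ((p - 1) * p) := by
  have hs : -1 < p - 2 := by linarith
  simp only [Finset.mul_sum]
  rw [intervalIntegral.integral_finsetSum fun i _ =>
      intervalIntegrable_rpow_mul_posPart_sub hs (a i) 0 M, Finset.sum_div]
  refine Finset.sum_congr rfl fun i hi => ?_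
  rw [integral_rpow_mul_posPart_sub hs (ha i hi) (haM i hi)]
  ring_nf

theorem sum_rpow_le_of_sum_posPart_sub_le (hp : 1 < p) (ha : ∀ i ∈ u, 0 ≤ a i)
    (hb : ∀ j ∈ v, 0 ≤ b j)
    (h : ∀ t, 0 < t → ∑ i ∈ u, (a i - t)⁺ ≤ K * ∑ j ∈ v, (b j - t)⁺) :
    ∑ i ∈ u, a i ^ p ≤ K * ∑ j ∈ v, b j ^ p := by
  obtain ⟨M, hM⟩ := (u.finite_toSet.image a |>.union (v.finite_toSet.image b)).bddAbove
  have haM (i) (hi : i ∈ u) : a i ≤ max M 0 :=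
    le_max_of_le_left (hM (.inl (Set.mem_image_of_mem a hi)))
  have hbM (j) (hj : j ∈ v) : b j ≤ max M 0 :=
    le_max_of_le_left (hM (.inr (Set.mem_image_of_mem b hj)))
  have hs : -1 < p - 2 := by linarith
  have integral_le : ∫ t in 0..max M 0, t ^ (p - 2) * ∑ i ∈ u, (a i - t)⁺ ≤
      ∫ t in 0..max M 0, K * (t ^ (p - 2) * ∑ j ∈ v, (b j - t)⁺) := by
    refine intervalIntegral.integral_mono_on_of_le_Ioo (le_max_right M 0)
      (intervalIntegrable_rpow_mul_sum_posPart_sub hs u a 0 _)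
      ((intervalIntegrable_rpow_mul_sum_posPart_sub hs v b 0 _).const_mul K) fun t ht => ?_
    rw [mul_left_comm]
    exact mul_le_mul_of_nonneg_left (h t ht.1) (Real.rpow_nonneg ht.1.le _)
  rw [intervalIntegral.integral_const_mul, integral_rpow_mul_sum_posPart_sub hp ha haM,
    integral_rpow_mul_sum_posPart_sub hp hb hbM, ← mul_div_assoc] at integral_le
  exact (div_le_div_iff_of_pos_right (mul_pos (by linarith) (by linarith))).1 integral_le

lemma nonpos_of_sum_posPart_le
    (h : ∀ t, 0 < t → ∑ i ∈ u, (a i)⁺ ≤ K * ∑ j ∈ v, (b j - t)⁺) : ∀ i ∈ u, a i ≤ 0 := by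
  obtain ⟨M, hM⟩ := (v.finite_toSet.image b).bddAbove
  have excess_eq_zero : ∑ j ∈ v, (b j - max M 1)⁺ = 0 := Finset.sum_eq_zero fun j hj =>
    posPart_of_nonpos (sub_nonpos.2 (le_max_of_le_left (hM (Set.mem_image_of_mem b hj))))
  intro i hi
  calc a i ≤ (a i)⁺ := le_posPart (a i)
    _ ≤ ∑ i ∈ u, (a i)⁺ :=
      Finset.single_le_sum (f := fun i => (a i)⁺) (fun i _ => posPart_nonneg (a i)) hi
    _ ≤ K * ∑ j ∈ v, (b j - max M 1)⁺ := h _ (by positivity)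
    _ = 0 := by rw [excess_eq_zero, mul_zero]

theorem sum_rpow_le_of_sum_posPart_sub_mul_le (hp : 1 < p) (hL : 0 ≤ L)
    (ha : ∀ i ∈ u, 0 ≤ a i) (hb : ∀ j ∈ v, 0 ≤ b j)
    (h : ∀ t, 0 < t → ∑ i ∈ u, (a i - L * t)⁺ ≤ K * ∑ j ∈ v, (b j - t)⁺) :
    ∑ i ∈ u, a i ^ p ≤ K * L ^ (p - 1) * ∑ j ∈ v, b j ^ p := by
  rcases hL.eq_or_lt with rfl | hL_pos
  · have a_eq_zero (i) (hi : i ∈ u) : a i = 0 :=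
      le_antisymm (nonpos_of_sum_posPart_le (by simpa only [zero_mul, sub_zero] using h) i hi)
        (ha i hi)
    rw [Real.zero_rpow (by linarith), mul_zero, zero_mul]
    exact (Finset.sum_eq_zero fun i hi => by
      rw [a_eq_zero i hi, Real.zero_rpow (by linarith)]).le
  · have excess_smul (t : ℝ) (j : κ) : (b j - t / L)⁺ = (L * b j - t)⁺ / L := by
      rw [posPart_def, posPart_def, ← max_div_div_right hL, zero_div, sub_div,
        mul_div_cancel_left₀ _ hL_pos.ne']
    have sum_le := sum_rpow_le_of_sum_posPart_sub_le (K := K / L) (b := fun j => L * b j) hp ha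
      (fun j hj => mul_nonneg hL (hb j hj)) fun t ht => by
        simpa only [mul_div_cancel₀ t hL_pos.ne', excess_smul, ← Finset.sum_div, mul_div_assoc',
          div_mul_eq_mul_div] using h (t / L) (div_pos ht hL_pos)
    calc ∑ i ∈ u, a i ^ p ≤ K / L * ∑ j ∈ v, (L * b j) ^ p := sum_le
      _ = K / L * ∑ j ∈ v, L ^ p * b j ^ p := by
        congr 1
        exact Finset.sum_congr rfl fun j hj => Real.mul_rpow hL (hb j hj)
      _ = K * L ^ (p - 1) * ∑ j ∈ v, b j ^ p := by
        rw [← Finset.mul_sum, Real.rpow_sub_one hL_pos.ne']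
        ring

end Majorization

section Truncation

lemma exists_norm_le_and_norm_sub_eq_posPart {E : Type*} [SeminormedAddCommGroup E]
    [NormedSpace ℝ E] {t : ℝ} (ht : 0 ≤ t) (x : E) :
    ∃ y : E, ‖y‖ ≤ t ∧ ‖x - y‖ = (‖x‖ - t)⁺ := by
  rcases le_or_gt ‖x‖ t with hx | hx
  · exact ⟨x, hx, by rw [sub_self, norm_zero, posPart_of_nonpos (sub_nonpos.2 hx)]⟩
  · have norm_pos : 0 < ‖x‖ := ht.trans_lt hx
    have ratio_le_one : t / ‖x‖ ≤ 1 := (div_le_one norm_pos).2 hx.le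
    refine ⟨(t / ‖x‖) • x, ?_, ?_⟩
    · rw [norm_smul_of_nonneg (by positivity), div_mul_cancel₀ _ norm_pos.ne']
    · calc ‖x - (t / ‖x‖) • x‖ = ‖(1 - t / ‖x‖) • x‖ := by rw [sub_smul, one_smul]
        _ = (1 - t / ‖x‖) * ‖x‖ := norm_smul_of_nonneg (sub_nonneg.2 ratio_le_one) x
        _ = ‖x‖ - t := by rw [sub_mul, one_mul, div_mul_cancel₀ _ norm_pos.ne']
        _ = (‖x‖ - t)⁺ := (posPart_of_nonneg (sub_nonneg.2 hx.le)).symm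

variable {ι κ : Type*} [Fintype ι] [Fintype κ] {E : ι → Type*} {F : κ → Type*}
  [∀ i, SeminormedAddCommGroup (E i)] [∀ i, NormedSpace ℝ (E i)]
  [∀ j, SeminormedAddCommGroup (F j)] {C1 Cinf : ℝ} {Φ : (∀ i, E i) → ∀ j, F j}

lemma sum_posPart_norm_sub_le (hCinf : 0 ≤ Cinf)
    (h1 : ∀ z z', ∑ j, ‖Φ z j - Φ z' j‖ ≤ C1 * ∑ i, ‖z i - z' i‖)
    (hinf : ∀ z z', ‖Φ z - Φ z'‖ ≤ Cinf * ‖z - z'‖) {t : ℝ} (ht : 0 ≤ t) (z z' : ∀ i, E i) :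
    ∑ j, (‖Φ z j - Φ z' j‖ - Cinf * t)⁺ ≤ C1 * ∑ i, (‖z i - z' i‖ - t)⁺ := by
  choose w norm_w_le norm_sub_w using
    fun i => exists_norm_le_and_norm_sub_eq_posPart ht (z i - z' i)
  set y := z' + w with hy
  have norm_Φ_sub_le (j : κ) : ‖Φ y j - Φ z' j‖ ≤ Cinf * t := by
    calc ‖Φ y j - Φ z' j‖ ≤ ‖Φ y - Φ z'‖ := norm_le_pi_norm (Φ y - Φ z') j
      _ ≤ Cinf * ‖y - z'‖ := hinf y z'
      _ ≤ Cinf * t := by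
        gcongr
        rw [hy, add_sub_cancel_left]
        exact (pi_norm_le_iff_of_nonneg ht).2 norm_w_le
  calc ∑ j, (‖Φ z j - Φ z' j‖ - Cinf * t)⁺ ≤ ∑ j, ‖Φ z j - Φ y j‖ := by
        refine Finset.sum_le_sum fun j _ => max_le ?_ (norm_nonneg _)
        linarith [norm_sub_le_norm_sub_add_norm_sub (Φ z j) (Φ y j) (Φ z' j), norm_Φ_sub_le j]
    _ ≤ C1 * ∑ i, ‖z i - y i‖ := h1 z y
    _ = C1 * ∑ i, (‖z i - z' i‖ - t)⁺ := by
        simp only [hy, Pi.add_apply, ← sub_sub, norm_sub_w]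

theorem lp_lipschitz_interpolation_general (hC1 : 0 ≤ C1) (hCinf : 0 ≤ Cinf)
    (h1 : ∀ z z', ∑ j, ‖Φ z j - Φ z' j‖ ≤ C1 * ∑ i, ‖z i - z' i‖)
    (hinf : ∀ z z', ‖Φ z - Φ z'‖ ≤ Cinf * ‖z - z'‖) {p : ℝ} (hp : 1 < p) (z z' : ∀ i, E i) :
    (∑ j, ‖Φ z j - Φ z' j‖ ^ p) ^ (1 / p) ≤
      C1 ^ (1 / p) * Cinf ^ (1 - 1 / p) * (∑ i, ‖z i - z' i‖ ^ p) ^ (1 / p) := by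
  have sum_rpow_le : ∑ j, ‖Φ z j - Φ z' j‖ ^ p ≤
      C1 * Cinf ^ (p - 1) * ∑ i, ‖z i - z' i‖ ^ p :=
    sum_rpow_le_of_sum_posPart_sub_mul_le hp hCinf (fun _ _ => norm_nonneg _)
      (fun _ _ => norm_nonneg _) fun _ ht => sum_posPart_norm_sub_le hCinf h1 hinf ht.le z z'
  calc (∑ j, ‖Φ z j - Φ z' j‖ ^ p) ^ (1 / p)
      ≤ (C1 * Cinf ^ (p - 1) * ∑ i, ‖z i - z' i‖ ^ p) ^ (1 / p) := by gcongr
    _ = C1 ^ (1 / p) * Cinf ^ ((p - 1) * (1 / p)) * (∑ i, ‖z i - z' i‖ ^ p) ^ (1 / p) := by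
        rw [Real.mul_rpow (by positivity) (by positivity), Real.mul_rpow hC1 (by positivity),
          ← Real.rpow_mul hCinf]
    _ = C1 ^ (1 / p) * Cinf ^ (1 - 1 / p) * (∑ i, ‖z i - z' i‖ ^ p) ^ (1 / p) := by
        congr 3
        field

end Truncation

lemma pi_norm_eq_ciSup {ι : Type*} [Fintype ι] {E : ι → Type*}
    [∀ i, SeminormedAddCommGroup (E i)] (x : ∀ i, E i) : ‖x‖ = ⨆ i, ‖x i‖ :=
  le_antisymm
    ((pi_norm_le_iff_of_nonneg (Real.iSup_nonneg fun i => norm_nonneg (x i))).2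
      (le_ciSup (Set.finite_range fun i => ‖x i‖).bddAbove))
    (Real.iSup_le (norm_le_pi_norm x) (norm_nonneg x))

/-- **Interpolation of Lipschitz bounds** (via Rademacher and Riesz–Thorin): if
`Φ : ℝ^N → ℝ^N` is `C₁`-Lipschitz for the `ℓ¹` norm and `C_∞`-Lipschitz for the
`ℓ^∞` norm, then it is `C₁^{1/p} C_∞^{1−1/p}`-Lipschitz for the `ℓ^p` norm,
for every `p ∈ (1,∞)`. -/
theorem lp_lipschitz_interpolation (N : ℕ) (hN : 1 ≤ N)
    (C1 Cinf : ℝ) (hC1 : 0 ≤ C1) (hCinf : 0 ≤ Cinf)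
    (Φ : (Fin N → ℝ) → (Fin N → ℝ))
    (h1 : ∀ z z' : Fin N → ℝ,
      ∑ i : Fin N, |Φ z i - Φ z' i| ≤ C1 * ∑ i : Fin N, |z i - z' i|)
    (hinf : ∀ z z' : Fin N → ℝ,
      (⨆ i : Fin N, |Φ z i - Φ z' i|) ≤ Cinf * ⨆ i : Fin N, |z i - z' i|)
    (p : ℝ) (hp : 1 < p) (z z' : Fin N → ℝ) :
    (∑ i : Fin N, |Φ z i - Φ z' i| ^ p) ^ (1 / p)
      ≤ C1 ^ (1 / p) * Cinf ^ (1 - 1 / p) *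
        (∑ i : Fin N, |z i - z' i| ^ p) ^ (1 / p) := by
  simp only [← Real.norm_eq_abs, ← Pi.sub_apply, ← pi_norm_eq_ciSup] at h1 hinf ⊢
  exact lp_lipschitz_interpolation_general hC1 hCinf h1 hinf hp z z'
end
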